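/- arXiv:2006.09076 — 5 statements merged into one kernel-verified Lean document; each statement's English description precedes it below -/
import Mathlib

section
/- Hoffman's relation: let k=(k_1,…,k_a) be a nonempty admissible index (all k_i≥1, k_a≥2). Then Σ_{i=0}^{a−1} ζ(k_1,…,k_i, k_{i+1}+1, k_{i+2},…,k_a) = Σ_{i=1}^{a} Σ_{j=1}^{k_i−1} ζ(k_1,…,k_{i−1}, k_i−j, j+1, k_{i+1},…,k_a), where inner sums with k_i=1 are empty; all indices appearing are admissible, so all multiple zeta values converge. -/
open scoped Classical

noncomputable section

/-- Multiple zeta value of an index `k = (k₁, …, kₐ)`: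
`ζ(k) = Σ_{0 < n₁ < ⋯ < nₐ} ∏ nᵢ^(-kᵢ)`, as a `tsum` of reals. -/
def mzv (k : List ℕ) : ℝ :=
  ∑' n : Fin k.length → ℕ,
    Set.indicator {n : Fin k.length → ℕ | (∀ i, 0 < n i) ∧ StrictMono n}
      (fun n => ∏ i, ((n i : ℝ) ^ k.get i)⁻¹) n

/-!
For a fixed upper bound `N`, the truncated sums are entries of products of strictly upper
triangular kernels, one factor with entries `n ^ (-kᵢ)` for each `kᵢ`. Partial fractions show that
the kernel form of the difference of the two sides for a one-entry index is the commutator of that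
kernel with a fixed element `E`. As `⁅·, E⁆` is a derivation, the Leibniz rule identifies the
difference for an index `k` of length `a` with `⁅K, E⁆`, where `K` is the product of kernels
attached to `k`. Row `0` of `E` vanishes, so only `K * E` contributes to the truncated sums. What
remains is `∑_{n < N} K(0, n) (H_{N-1} - H_{N-1-n})`, which tends to `0` because
`K(0, n) ≤ H_n ^ (a-1) / n ^ 2` by admissibility.
-/

open Finset Filter

/-! ### Strictly upper triangular kernels -/

section StrictKernel

variable {α 𝕜 : Type*} [Preorder α]

/-- The element of the incidence algebra with entries `c a b` for `a < b` and zero otherwise: the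
analogue of a strictly upper triangular matrix. -/
def strictKernel [Zero 𝕜] (c : α → α → 𝕜) : IncidenceAlgebra 𝕜 α :=
  ⟨fun a b => if a < b then c a b else 0, fun _ _ hab => if_neg fun h' => hab h'.le⟩

/-- The element of the incidence algebra with diagonal entries `h a` and zero otherwise: the
analogue of a diagonal matrix. -/
def diagonalKernel [Zero 𝕜] (h : α → 𝕜) : IncidenceAlgebra 𝕜 α :=
  ⟨fun a b => if a = b then h a else 0, fun _ _ hab => if_neg fun h' => hab h'.le⟩

theorem strictKernel_apply [Zero 𝕜] (c : α → α → 𝕜) (a b : α) :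
    strictKernel c a b = if a < b then c a b else 0 := rfl

theorem diagonalKernel_apply [Zero 𝕜] (h : α → 𝕜) (a b : α) :
    diagonalKernel h a b = if a = b then h a else 0 := rfl

theorem strictKernel_congr [Zero 𝕜] {c d : α → α → 𝕜}
    (h : ∀ a b, a < b → c a b = d a b) : strictKernel c = strictKernel d := by
  ext a b
  simp only [strictKernel_apply]
  split_ifs with hab
  exacts [h a b hab, rfl]

theorem strictKernel_sub [AddGroup 𝕜] (c d : α → α → 𝕜) :
    strictKernel c - strictKernel d = strictKernel (c - d) := by
  ext a b
  simp only [IncidenceAlgebra.sub_apply, strictKernel_apply, Pi.sub_apply]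
  split_ifs
  exacts [rfl, sub_self 0]

theorem sum_incidenceAlgebra_apply {ι : Type*} [AddCommMonoid 𝕜] (s : Finset ι)
    (f : ι → IncidenceAlgebra 𝕜 α) (a b : α) : (∑ i ∈ s, f i) a b = ∑ i ∈ s, f i a b :=
  map_sum (⟨⟨fun g => g a b, rfl⟩, fun _ _ => rfl⟩ : IncidenceAlgebra 𝕜 α →+ 𝕜) f s

theorem sum_strictKernel {ι : Type*} [AddCommMonoid 𝕜] (s : Finset ι) (c : ι → α → α → 𝕜) :
    ∑ i ∈ s, strictKernel (c i) = strictKernel fun a b => ∑ i ∈ s, c i a b := by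
  ext a b
  simp only [sum_incidenceAlgebra_apply, strictKernel_apply]
  split_ifs
  exacts [rfl, sum_const_zero]

variable [LocallyFiniteOrder α]

theorem mul_strictKernel_apply [NonUnitalNonAssocSemiring 𝕜] (f : IncidenceAlgebra 𝕜 α)
    (c : α → α → 𝕜) (a b : α) : (f * strictKernel c) a b = ∑ x ∈ Ico a b, f a x * c x b := by
  simp only [IncidenceAlgebra.mul_apply, strictKernel_apply, mul_ite, mul_zero, ← sum_filter]
  congr 1
  ext x
  simp only [mem_filter, mem_Icc, mem_Ico]
  exact ⟨fun h => ⟨h.1.1, h.2⟩, fun h => ⟨⟨h.1, h.2.le⟩, h.2⟩⟩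

theorem strictKernel_mul_strictKernel [NonUnitalNonAssocSemiring 𝕜] (c d : α → α → 𝕜) :
    strictKernel c * strictKernel d = strictKernel fun a b => ∑ x ∈ Ioo a b, c a x * d x b := by
  ext a b
  rw [mul_strictKernel_apply, strictKernel_apply]
  simp only [strictKernel_apply, ite_mul, zero_mul, ← sum_filter]
  split_ifs with hab
  · congr 1
    ext x
    simp only [mem_filter, mem_Ico, mem_Ioo]
    exact ⟨fun h => ⟨h.2, h.1.2⟩, fun h => ⟨⟨h.1.le, h.2⟩, h.1⟩⟩
  · simp [Ico_eq_empty hab]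

theorem diagonalKernel_mul_strictKernel [NonUnitalNonAssocSemiring 𝕜] (h : α → 𝕜)
    (c : α → α → 𝕜) :
    diagonalKernel h * strictKernel c = strictKernel fun a b => h a * c a b := by
  ext a b
  rw [mul_strictKernel_apply, strictKernel_apply]
  simp only [diagonalKernel_apply, ite_mul, zero_mul, sum_ite_eq, mem_Ico, le_refl, true_and]

theorem mul_diagonalKernel_apply [NonUnitalNonAssocSemiring 𝕜] (f : IncidenceAlgebra 𝕜 α)
    (h : α → 𝕜) (a b : α) : (f * diagonalKernel h) a b = f a b * h b := by
  by_cases hab : a ≤ b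
  · simp [IncidenceAlgebra.mul_apply, diagonalKernel_apply, hab]
  · simp only [IncidenceAlgebra.apply_eq_zero_of_not_le hab, zero_mul]

theorem strictKernel_mul_diagonalKernel [NonUnitalNonAssocSemiring 𝕜] (c : α → α → 𝕜)
    (h : α → 𝕜) :
    strictKernel c * diagonalKernel h = strictKernel fun a b => c a b * h b := by
  ext a b
  rw [mul_diagonalKernel_apply, strictKernel_apply, strictKernel_apply, ite_mul, zero_mul]

end StrictKernel

theorem sum_take_mul_lie_mul_drop {ι A : Type*} [Ring A] (f : ι → A) (a : A) (d : ι) (l : List ι) :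
    ∑ i ∈ range l.length,
        ((l.take i).map f).prod * ⁅f (l.getD i d), a⁆ * ((l.drop (i + 1)).map f).prod =
      ⁅(l.map f).prod, a⁆ := by
  induction l with
  | nil => simp [Ring.lie_def]
  | cons x l ih =>
    simp only [List.length_cons, sum_range_succ', List.take_succ_cons, List.map_cons,
      List.prod_cons, List.getD_cons_succ, List.drop_succ_cons, mul_assoc, ← mul_sum]
    simp only [mul_assoc] at ih
    rw [ih]
    simp only [Ring.lie_def, List.take_zero, List.map_nil, List.prod_nil, List.getD_cons_zero,
      List.drop_zero, one_mul]
    noncomm_ring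

/-! ### Harmonic sums and partial fractions -/

theorem sum_Ioo_inv_sub_left (m n : ℕ) :
    ∑ p ∈ Ioo m n, ((p : ℝ) - m)⁻¹ = harmonic (n - 1 - m) := by
  rw [harmonic, ← Ico_add_one_left_eq_Ioo, sum_Ico_eq_sum_range,
    show n - (m + 1) = n - 1 - m by omega]
  push_cast
  refine sum_congr rfl fun i _ => ?_
  congr 1
  ring

theorem sum_Ioo_inv_sub_right (m n : ℕ) :
    ∑ p ∈ Ioo m n, ((n : ℝ) - p)⁻¹ = harmonic (n - 1 - m) := by
  rw [← sum_Ioo_inv_sub_left]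
  refine sum_nbij' (fun p => m + n - p) (fun p => m + n - p) ?_ ?_ ?_ ?_ ?_ <;>
    intro p hp <;> rw [mem_Ioo] at hp
  · rw [mem_Ioo]; omega
  · rw [mem_Ioo]; omega
  · omega
  · omega
  · rw [Nat.cast_sub (by omega)]
    push_cast
    congr 1
    ring

theorem sum_Ioo_inv {m n : ℕ} (h : m < n) :
    ∑ p ∈ Ioo m n, (p : ℝ)⁻¹ = harmonic (n - 1) - harmonic m := by
  obtain ⟨n, rfl⟩ := Nat.exists_eq_add_one_of_ne_zero (Nat.ne_zero_of_lt h)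
  rw [Ioo_add_one_right_eq_Ioc]
  induction n, (Nat.le_of_lt_succ h) using Nat.le_induction with
  | base => simp
  | succ n hn ih =>
    rw [sum_Ioc_succ_top hn, ih (by omega)]
    simp only [Nat.add_sub_cancel, harmonic_succ]
    push_cast
    ring

theorem sum_inv_pow_mul_inv_pow {K : Type*} [Field K] {x y : K} (hx : x ≠ 0) (hy : y ≠ 0)
    (hxy : x ≠ y) {k : ℕ} (hk : 1 ≤ k) :
    ∑ j ∈ Icc 1 (k - 1), (x ^ (k - j))⁻¹ * (y ^ (j + 1))⁻¹ =
      (x ^ k)⁻¹ * ((y - x)⁻¹ - y⁻¹) - (y ^ k)⁻¹ * (y - x)⁻¹ := by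
  have hyx : y - x ≠ 0 := sub_ne_zero.2 hxy.symm
  induction k, hk using Nat.le_induction with
  | base =>
    simp only [Nat.sub_self, Icc_eq_empty_of_lt one_pos, sum_empty, pow_one]
    field_simp
    ring
  | succ k hk ih =>
    have hrec : ∑ j ∈ Icc 1 k, (x ^ (k + 1 - j))⁻¹ * (y ^ (j + 1))⁻¹ =
        x⁻¹ * ∑ j ∈ Icc 1 (k - 1), (x ^ (k - j))⁻¹ * (y ^ (j + 1))⁻¹ +
          x⁻¹ * (y ^ (k + 1))⁻¹ := by
      obtain ⟨k, rfl⟩ := Nat.exists_eq_add_of_le' hk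
      rw [sum_Icc_succ_top (by omega), mul_sum]
      congr 1
      · refine sum_congr rfl fun j hj => ?_
        rw [show k + 1 + 1 - j = k + 1 - j + 1 by grind]
        ring
      · simp
    rw [Nat.add_sub_cancel, hrec, ih]
    field_simp
    ring

/-! ### The commutator identity -/

/-- The power kernel: a product `powKernel k₁ * ⋯ * powKernel kₐ` has as its `(m, n)` entry the sum
of `∏ nᵢ ^ (-kᵢ)` over `m < n₁ < ⋯ < nₐ = n`. -/
def powKernel (k : ℕ) : IncidenceAlgebra ℝ ℕ :=
  strictKernel fun _ n => ((n : ℝ) ^ k)⁻¹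

/-- The strict variant of `IncidenceAlgebra.zeta`; multiplying by it on the right sums over the
second argument. -/
def strictZeta : IncidenceAlgebra ℝ ℕ := strictKernel 1

/-- The product of power kernels attached to the index `k`. -/
def mzvKernel (k : List ℕ) : IncidenceAlgebra ℝ ℕ := (k.map powKernel).prod

/-- The element whose commutator with `powKernel k` is the kernel form of the difference of the two
sides of Hoffman's relation for the index `[k]`. Its entries are forced by the partial fraction
expansion in `powKernel_mul_powKernel_sum`. -/
def harmonicKernel : IncidenceAlgebra ℝ ℕ :=
  diagonalKernel (fun m : ℕ => (harmonic m : ℝ)) -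
    strictKernel fun m n : ℕ => ((n : ℝ) - m)⁻¹ - (n : ℝ)⁻¹

theorem mzvKernel_append (k l : List ℕ) : mzvKernel (k ++ l) = mzvKernel k * mzvKernel l := by
  simp [mzvKernel]

theorem sum_Ioo_inv_sub_sub_inv {m n : ℕ} (h : m < n) :
    ∑ p ∈ Ioo m n, (((p : ℝ) - m)⁻¹ - (p : ℝ)⁻¹) =
      harmonic m - (harmonic (n - 1) - harmonic (n - 1 - m)) := by
  rw [sum_sub_distrib, sum_Ioo_inv_sub_left, sum_Ioo_inv h]
  ring

theorem harmonic_sub_one_add_inv {n : ℕ} (hn : n ≠ 0) :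
    (harmonic (n - 1) : ℝ) + (n : ℝ)⁻¹ = harmonic n := by
  obtain ⟨n, rfl⟩ := Nat.exists_eq_add_one_of_ne_zero hn
  simp

theorem powKernel_mul_powKernel_sum {k : ℕ} (hk : 1 ≤ k) :
    ∑ j ∈ Icc 1 (k - 1), powKernel (k - j) * powKernel (j + 1) =
      strictKernel fun m n : ℕ =>
        ∑ p ∈ Ioo m n, ((p : ℝ) ^ k)⁻¹ * (((n : ℝ) - p)⁻¹ - (n : ℝ)⁻¹) -
          ((n : ℝ) ^ k)⁻¹ * harmonic (n - 1 - m) := by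
  simp only [powKernel, strictKernel_mul_strictKernel, sum_strictKernel]
  refine strictKernel_congr fun m n _ => ?_
  rw [sum_comm, ← sum_Ioo_inv_sub_right, mul_sum, ← sum_sub_distrib]
  refine sum_congr rfl fun p hp => sum_inv_pow_mul_inv_pow ?_ ?_ ?_ hk <;>
    rw [mem_Ioo] at hp <;> norm_cast <;> omega

theorem lie_powKernel_harmonicKernel {k : ℕ} (hk : 1 ≤ k) :
    ⁅powKernel k, harmonicKernel⁆ =
      powKernel (k + 1) - ∑ j ∈ Icc 1 (k - 1), powKernel (k - j) * powKernel (j + 1) := by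
  rw [powKernel_mul_powKernel_sum hk, Ring.lie_def, harmonicKernel, mul_sub, sub_mul]
  simp only [powKernel, diagonalKernel_mul_strictKernel, strictKernel_mul_diagonalKernel,
    strictKernel_mul_strictKernel, strictKernel_sub]
  refine strictKernel_congr fun m n hmn => ?_
  simp only [Pi.sub_apply, ← sum_mul, sum_Ioo_inv_sub_sub_inv hmn]
  rw [← harmonic_sub_one_add_inv (Nat.ne_zero_of_lt hmn), pow_succ, mul_inv]
  ring

theorem hoffman_mzvKernel {k : List ℕ} (hk : ∀ i ∈ k, 1 ≤ i) :
    ∑ i ∈ range k.length, mzvKernel (k.take i ++ [k.getD i 0 + 1] ++ k.drop (i + 1)) -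
        ∑ i ∈ range k.length, ∑ j ∈ Icc 1 (k.getD i 0 - 1),
          mzvKernel (k.take i ++ [k.getD i 0 - j, j + 1] ++ k.drop (i + 1)) =
      ⁅mzvKernel k, harmonicKernel⁆ := by
  simp only [mzvKernel]
  rw [← sum_take_mul_lie_mul_drop powKernel _ 0, ← sum_sub_distrib]
  refine sum_congr rfl fun i hi => ?_
  rw [mem_range] at hi
  rw [lie_powKernel_harmonicKernel (hk _ (by simp [hi])), mul_sub, sub_mul, mul_sum, sum_mul]
  simp [mul_assoc]

theorem harmonicKernel_mul_apply_zero (f : IncidenceAlgebra ℝ ℕ) (n : ℕ) :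
    (harmonicKernel * f) 0 n = 0 := by
  rw [IncidenceAlgebra.mul_apply]
  refine sum_eq_zero fun p _ => ?_
  simp [harmonicKernel, IncidenceAlgebra.sub_apply, diagonalKernel_apply, strictKernel_apply]

theorem harmonicKernel_mul_strictZeta :
    harmonicKernel * strictZeta =
      strictKernel fun m n : ℕ => (harmonic (n - 1) : ℝ) - harmonic (n - 1 - m) := by
  simp only [harmonicKernel, strictZeta, sub_mul, diagonalKernel_mul_strictKernel,
    strictKernel_mul_strictKernel, strictKernel_sub]
  refine strictKernel_congr fun m n hmn => ?_
  simp only [Pi.sub_apply, Pi.one_apply, mul_one, sum_Ioo_inv_sub_sub_inv hmn]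
  ring

/-- The truncation `∑_{0 < n₁ < ⋯ < nₐ < N} ∏ nᵢ ^ (-kᵢ)` of `mzv k`, for `0 < N`. -/
def truncMZV (N : ℕ) (k : List ℕ) : ℝ := (mzvKernel k * strictZeta) 0 N

theorem truncMZV_eq_sum (N : ℕ) (k : List ℕ) : truncMZV N k = ∑ n ∈ range N, mzvKernel k 0 n := by
  rw [truncMZV, strictZeta, mul_strictKernel_apply, Nat.Ico_zero_eq_range]
  simp only [Pi.one_apply, mul_one]

theorem hoffman_truncMZV {k : List ℕ} (hk : ∀ i ∈ k, 1 ≤ i) (N : ℕ) :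
    ∑ i ∈ range k.length, truncMZV N (k.take i ++ [k.getD i 0 + 1] ++ k.drop (i + 1)) -
        ∑ i ∈ range k.length, ∑ j ∈ Icc 1 (k.getD i 0 - 1),
          truncMZV N (k.take i ++ [k.getD i 0 - j, j + 1] ++ k.drop (i + 1)) =
      ∑ n ∈ Ioo 0 N, mzvKernel k 0 n * (harmonic (N - 1) - harmonic (N - 1 - n)) := by
  have hcomm : (⁅mzvKernel k, harmonicKernel⁆ * strictZeta) 0 N =
      ∑ n ∈ Ioo 0 N, mzvKernel k 0 n * (harmonic (N - 1) - harmonic (N - 1 - n)) := by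
    rw [Ring.lie_def, sub_mul, IncidenceAlgebra.sub_apply, mul_assoc, mul_assoc,
      harmonicKernel_mul_apply_zero, sub_zero, harmonicKernel_mul_strictZeta,
      mul_strictKernel_apply]
    refine (sum_subset Ioo_subset_Ico_self fun n hn hn' => ?_).symm
    obtain rfl : n = 0 := by grind
    simp
  rw [← hcomm, ← hoffman_mzvKernel hk]
  simp only [sub_mul, sum_mul, IncidenceAlgebra.sub_apply, sum_incidenceAlgebra_apply, truncMZV]

/-! ### Bounds for admissible indices -/

theorem harmonic_cast_mono : Monotone fun n : ℕ => (harmonic n : ℝ) :=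
  monotone_nat_of_le_succ fun n => by
    rw [harmonic_succ]
    push_cast
    exact le_add_of_nonneg_right (by positivity)

theorem harmonic_cast_nonneg (n : ℕ) : (0 : ℝ) ≤ harmonic n := by
  simpa using harmonic_cast_mono n.zero_le

theorem sum_Ioo_inv_le_harmonic (m n : ℕ) : ∑ p ∈ Ioo m n, (p : ℝ)⁻¹ ≤ harmonic n := by
  rcases lt_or_ge m n with h | h
  · rw [sum_Ioo_inv h]
    exact (sub_le_self _ (harmonic_cast_nonneg m)).trans (harmonic_cast_mono (Nat.sub_le n 1))
  · simpa [Ioo_eq_empty h.not_gt] using harmonic_cast_nonneg n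

theorem harmonic_sub_harmonic_le {n N : ℕ} (h : n < N) :
    (harmonic (N - 1) : ℝ) - harmonic (N - 1 - n) ≤ n * ((N : ℝ) - n)⁻¹ := by
  have hnN : (n : ℝ) < N := by exact_mod_cast h
  rw [← sum_Ioo_inv (by omega)]
  calc ∑ p ∈ Ioo (N - 1 - n) N, (p : ℝ)⁻¹
      ≤ #(Ioo (N - 1 - n) N) • ((N : ℝ) - n)⁻¹ := by
        refine sum_le_card_nsmul _ _ _ fun p hp => inv_anti₀ (sub_pos.2 hnN) ?_
        rw [mem_Ioo] at hp
        rw [sub_le_iff_le_add]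
        exact_mod_cast (by omega : N ≤ p + n)
    _ = n * ((N : ℝ) - n)⁻¹ := by
        rw [Nat.card_Ioo, nsmul_eq_mul, show N - (N - 1 - n) - 1 = n by omega]

theorem isLittleO_harmonic_pow_rpow (b : ℕ) {r : ℝ} (hr : 0 < r) :
    (fun n : ℕ => (harmonic n : ℝ) ^ b) =o[atTop] fun n : ℕ => (n : ℝ) ^ r := by
  have hlog : (fun n : ℕ => (harmonic n : ℝ)) =O[atTop] fun n : ℕ => Real.log n := by
    have hone : (fun n : ℕ => 1 + Real.log n) =O[atTop] fun n : ℕ => Real.log n :=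
      (Real.isLittleO_const_log_atTop.isBigO.add (Asymptotics.isBigO_refl _ _)).comp_tendsto
        tendsto_natCast_atTop_atTop
    refine .trans (.of_bound' (.of_forall fun n => ?_)) hone
    rw [Real.norm_of_nonneg (harmonic_cast_nonneg n)]
    exact (harmonic_le_one_add_log n).trans (le_abs_self _)
  refine (hlog.pow b).trans_isLittleO ?_
  simpa [Function.comp_def] using
    (isLittleO_log_rpow_rpow_atTop (b : ℝ) hr).comp_tendsto tendsto_natCast_atTop_atTop

theorem summable_harmonic_pow_mul_inv_sq (b : ℕ) :
    Summable fun n : ℕ => (harmonic n : ℝ) ^ b * ((n : ℝ) ^ 2)⁻¹ := by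
  refine summable_of_isBigO_nat (Real.summable_nat_rpow.2 (by norm_num : (-(3 / 2) : ℝ) < -1)) ?_
  refine (((isLittleO_harmonic_pow_rpow b one_half_pos).mul_isBigO
    (Asymptotics.isBigO_refl _ _)).isBigO).congr' .rfl ?_
  filter_upwards [eventually_gt_atTop 0] with n hn
  have hn : (0 : ℝ) < n := by exact_mod_cast hn
  rw [← Real.rpow_natCast, ← Real.rpow_neg hn.le, ← Real.rpow_add hn]
  norm_num

theorem mzvKernel_nonneg (k : List ℕ) (m n : ℕ) : 0 ≤ mzvKernel k m n := by
  induction k generalizing m with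
  | nil =>
    simp only [mzvKernel, List.map_nil, List.prod_nil, IncidenceAlgebra.one_apply]
    positivity
  | cons k l ih =>
    simp only [mzvKernel, List.map_cons, List.prod_cons, IncidenceAlgebra.mul_apply, powKernel,
      strictKernel_apply] at ih ⊢
    exact sum_nonneg fun p _ => mul_nonneg (by positivity) (ih p)

theorem mzvKernel_cons_mul_strictZeta_apply (k : ℕ) (l : List ℕ) (m n : ℕ) :
    (mzvKernel (k :: l) * strictZeta) m n =
      ∑ p ∈ Ioo m n, ((p : ℝ) ^ k)⁻¹ * (mzvKernel l * strictZeta) p n := by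
  have hself : (mzvKernel l * strictZeta) n n = 0 := by
    rw [strictZeta, mul_strictKernel_apply, Ico_self, sum_empty]
  rw [mzvKernel, List.map_cons, List.prod_cons, mul_assoc, ← mzvKernel,
    IncidenceAlgebra.mul_apply]
  simp only [powKernel, strictKernel_apply, ite_mul, zero_mul, ← sum_filter]
  refine (sum_subset (fun p hp => ?_) fun p hp hp' => ?_).symm
  · grind
  · obtain rfl : p = n := by grind
    rw [hself, mul_zero]

theorem inv_natCast_pow_le {i j : ℕ} (hi : i ≠ 0) (hij : i ≤ j) (n : ℕ) :
    ((n : ℝ) ^ j)⁻¹ ≤ ((n : ℝ) ^ i)⁻¹ := by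
  rcases n.eq_zero_or_pos with rfl | hn
  · simp [hi, (show j ≠ 0 by omega)]
  · have hn : (1 : ℝ) ≤ n := by exact_mod_cast hn
    exact inv_anti₀ (by positivity) (pow_le_pow_right₀ hn hij)

theorem mzvKernel_mul_strictZeta_le {l : List ℕ} (hl : ∀ i ∈ l, 1 ≤ i) (m n : ℕ) :
    (mzvKernel l * strictZeta) m n ≤ (harmonic n : ℝ) ^ l.length := by
  induction l generalizing m with
  | nil =>
    simp only [mzvKernel, List.map_nil, List.prod_nil, one_mul, strictZeta, strictKernel_apply,
      Pi.one_apply, List.length_nil, pow_zero]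
    split_ifs
    exacts [le_rfl, zero_le_one]
  | cons k l ih =>
    obtain ⟨hk, hl⟩ := List.forall_mem_cons.1 hl
    rw [mzvKernel_cons_mul_strictZeta_apply, List.length_cons, pow_succ']
    calc ∑ p ∈ Ioo m n, ((p : ℝ) ^ k)⁻¹ * (mzvKernel l * strictZeta) p n
        ≤ ∑ p ∈ Ioo m n, (p : ℝ)⁻¹ * (harmonic n : ℝ) ^ l.length := by
          refine sum_le_sum fun p _ => ?_
          refine (mul_le_mul_of_nonneg_left (ih hl p) (by positivity)).trans ?_
          refine mul_le_mul_of_nonneg_right ?_ (pow_nonneg (harmonic_cast_nonneg n) _)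
          simpa using inv_natCast_pow_le one_ne_zero hk p
      _ ≤ harmonic n * (harmonic n : ℝ) ^ l.length := by
          rw [← sum_mul]
          exact mul_le_mul_of_nonneg_right (sum_Ioo_inv_le_harmonic m n)
            (pow_nonneg (harmonic_cast_nonneg n) _)

theorem mzvKernel_append_singleton_apply (l : List ℕ) (x m n : ℕ) :
    mzvKernel (l ++ [x]) m n = (mzvKernel l * strictZeta) m n * ((n : ℝ) ^ x)⁻¹ := by
  have hx : mzvKernel [x] = strictZeta * diagonalKernel fun n : ℕ => ((n : ℝ) ^ x)⁻¹ := by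
    simp [mzvKernel, powKernel, strictZeta, strictKernel_mul_diagonalKernel]
  rw [mzvKernel_append, hx, ← mul_assoc, mul_diagonalKernel_apply]

/-- Admissibility of an index; the existential excludes the empty index. -/
structure IsAdmissible (k : List ℕ) : Prop where
  one_le : ∀ i ∈ k, 1 ≤ i
  two_le_last : ∃ x ∈ k.getLast?, 2 ≤ x

theorem IsAdmissible.replace {k s : List ℕ} (hk : IsAdmissible k) (hs : IsAdmissible s) (i : ℕ) :
    IsAdmissible (k.take i ++ s ++ k.drop (i + 1)) where
  one_le j hj := by
    simp only [List.mem_append] at hj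
    rcases hj with (hj | hj) | hj
    exacts [hk.one_le j (List.mem_of_mem_take hj), hs.one_le j hj,
      hk.one_le j (List.mem_of_mem_drop hj)]
  two_le_last := by
    obtain ⟨x, hx, hx2⟩ := hs.two_le_last
    rw [List.getLast?_append, List.getLast?_append, hx, List.getLast?_drop]
    split_ifs
    · exact ⟨x, rfl, hx2⟩
    · obtain ⟨y, hy, hy2⟩ := hk.two_le_last
      exact ⟨y, by simp [Option.mem_def.1 hy], hy2⟩

theorem IsAdmissible.mzvKernel_le {k : List ℕ} (hk : IsAdmissible k) (m n : ℕ) :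
    mzvKernel k m n ≤ (harmonic n : ℝ) ^ (k.length - 1) * ((n : ℝ) ^ 2)⁻¹ := by
  obtain ⟨x, hx, hx2⟩ := hk.two_le_last
  obtain ⟨l, rfl⟩ := List.getLast?_eq_some_iff.1 hx
  rw [mzvKernel_append_singleton_apply, List.length_append, List.length_singleton,
    Nat.add_sub_cancel]
  refine mul_le_mul (mzvKernel_mul_strictZeta_le (fun i hi => hk.one_le i ?_) m n)
    (inv_natCast_pow_le two_ne_zero hx2 n) (by positivity) (pow_nonneg (harmonic_cast_nonneg n) _)
  exact List.mem_append_left _ hi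

/-! ### Passage to the limit -/

/-- The increasing tuples `m < n₁ < ⋯ < nₐ < N` of length `a`. -/
def increasingTuples (a m N : ℕ) : Finset (Fin a → ℕ) :=
  {n ∈ Fintype.piFinset fun _ => Ioo m N | StrictMono n}

theorem mem_increasingTuples {a m N : ℕ} {n : Fin a → ℕ} :
    n ∈ increasingTuples a m N ↔ (∀ i, n i ∈ Ioo m N) ∧ StrictMono n := by
  rw [increasingTuples, mem_filter, Fintype.mem_piFinset]

theorem cons_mem_increasingTuples {a m N p : ℕ} {n : Fin a → ℕ} :
    (Fin.cons p n : Fin (a + 1) → ℕ) ∈ increasingTuples (a + 1) m N ↔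
      p ∈ Ioo m N ∧ n ∈ increasingTuples a p N := by
  simp only [mem_increasingTuples, Fin.forall_fin_succ, StrictMono, Fin.cons_zero, Fin.cons_succ,
    mem_Ioo, Fin.succ_lt_succ_iff, Fin.succ_pos, forall_const, Fin.not_lt_zero,
    IsEmpty.forall_iff, true_and, forall_and]
  grind

theorem sum_increasingTuples_succ {M : Type*} [AddCommMonoid M] (a m N : ℕ)
    (f : (Fin (a + 1) → ℕ) → M) :
    ∑ n ∈ increasingTuples (a + 1) m N, f n =
      ∑ p ∈ Ioo m N, ∑ n ∈ increasingTuples a p N, f (Fin.cons p n) := by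
  rw [sum_sigma']
  refine sum_nbij' (fun n => ⟨n 0, Fin.tail n⟩) (fun x => Fin.cons x.1 x.2) ?_ ?_ ?_ ?_ ?_
  · intro n hn
    rw [← Fin.cons_self_tail n] at hn
    exact mem_sigma.2 (cons_mem_increasingTuples.1 hn)
  · exact fun x hx => cons_mem_increasingTuples.2 (mem_sigma.1 hx)
  · exact fun n _ => Fin.cons_self_tail n
  · exact fun x _ => rfl
  · exact fun n _ => by rw [Fin.cons_self_tail]

theorem mzvKernel_mul_strictZeta_apply (k : List ℕ) {m N : ℕ} (h : m < N) :
    (mzvKernel k * strictZeta) m N =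
      ∑ n ∈ increasingTuples k.length m N, ∏ i, ((n i : ℝ) ^ k.get i)⁻¹ := by
  induction k generalizing m with
  | nil =>
    have hbox : increasingTuples 0 m N = univ := by
      ext n
      simp only [mem_increasingTuples, IsEmpty.forall_iff, Subsingleton.strictMono, mem_univ,
        and_self]
    simp [mzvKernel, strictZeta, strictKernel_apply, h, hbox]
  | cons x l ih =>
    rw [mzvKernel_cons_mul_strictZeta_apply]
    refine Eq.trans ?_ (sum_increasingTuples_succ l.length m N _).symm
    refine sum_congr rfl fun p hp => ?_
    rw [ih (mem_Ioo.1 hp).2, mul_sum]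
    exact sum_congr rfl fun n _ => (Fin.prod_univ_succ fun i : Fin (l.length + 1) =>
      (((Fin.cons p n : Fin (l.length + 1) → ℕ) i : ℝ) ^ (x :: l).get i)⁻¹).symm

/-- The summand of `mzv k`. -/
def mzvTerm (k : List ℕ) : (Fin k.length → ℕ) → ℝ :=
  Set.indicator {n | (∀ i, 0 < n i) ∧ StrictMono n} fun n => ∏ i, ((n i : ℝ) ^ k.get i)⁻¹

theorem mzvTerm_nonneg (k : List ℕ) (n : Fin k.length → ℕ) : 0 ≤ mzvTerm k n :=
  Set.indicator_nonneg (fun _ _ => prod_nonneg fun _ _ => by positivity) n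

theorem truncMZV_eq_sum_mzvTerm (k : List ℕ) {N : ℕ} (hN : 0 < N) :
    truncMZV N k = ∑ n ∈ Fintype.piFinset fun _ => range N, mzvTerm k n := by
  rw [truncMZV, mzvKernel_mul_strictZeta_apply k hN]
  simp only [mzvTerm, Set.indicator_apply, ← sum_filter]
  congr 1
  ext n
  simp only [mem_increasingTuples, mem_filter, Fintype.mem_piFinset, mem_Ioo, mem_range,
    Set.mem_ofPred_eq]
  grind

theorem tendsto_piFinset_range_atTop (ι : Type*) [Fintype ι] [DecidableEq ι] :
    Tendsto (fun N : ℕ => Fintype.piFinset fun _ : ι => range N) atTop atTop := by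
  refine tendsto_atTop_finset_of_monotone
    (fun a b hab => Fintype.piFinset_subset _ _ fun _ => range_mono hab) fun n => ?_
  obtain ⟨N, hN⟩ := (Set.finite_range n).bddAbove
  exact ⟨N + 1, Fintype.mem_piFinset.2 fun i => mem_range_succ_iff.2 (hN ⟨i, rfl⟩)⟩

theorem IsAdmissible.tendsto_truncMZV {k : List ℕ} (hk : IsAdmissible k) :
    Tendsto (fun N => truncMZV N k) atTop (nhds (mzv k)) := by
  have hev : ∀ᶠ N in atTop,
      ∑ n ∈ Fintype.piFinset fun _ => range N, mzvTerm k n = truncMZV N k :=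
    (eventually_gt_atTop 0).mono fun N hN => (truncMZV_eq_sum_mzvTerm k hN).symm
  have hsum : Summable (mzvKernel k 0) :=
    (summable_harmonic_pow_mul_inv_sq _).of_nonneg_of_le (mzvKernel_nonneg k 0) (hk.mzvKernel_le 0)
  have hterm : Summable (mzvTerm k) := by
    refine summable_of_sum_le (c := ∑' n, mzvKernel k 0 n) (mzvTerm_nonneg k) fun u => ?_
    obtain ⟨N, hu, hN⟩ :=
      (((tendsto_piFinset_range_atTop _).eventually_ge_atTop u).and hev).exists
    calc ∑ n ∈ u, mzvTerm k n ≤ truncMZV N k :=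
          (sum_le_sum_of_subset_of_nonneg hu fun n _ _ => mzvTerm_nonneg k n).trans_eq hN
      _ ≤ ∑' n, mzvKernel k 0 n := by
          rw [truncMZV_eq_sum]
          exact hsum.sum_le_tsum _ fun n _ => mzvKernel_nonneg k 0 n
  exact (hterm.hasSum.comp (tendsto_piFinset_range_atTop _)).congr' hev

theorem sum_Ioo_inv_mul_inv_sub_le (N : ℕ) :
    ∑ n ∈ Ioo 0 N, ((n : ℝ) ^ 2)⁻¹ * (n * ((N : ℝ) - n)⁻¹) ≤ 2 * (harmonic N * (N : ℝ)⁻¹) := by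
  have hsplit : ∀ n ∈ Ioo 0 N, ((n : ℝ) ^ 2)⁻¹ * (n * ((N : ℝ) - n)⁻¹) =
      (N : ℝ)⁻¹ * ((n : ℝ)⁻¹ + ((N : ℝ) - n)⁻¹) := by
    intro n hn
    rw [mem_Ioo] at hn
    have hn0 : (0 : ℝ) < n := by exact_mod_cast hn.1
    have hnN : (n : ℝ) < N := by exact_mod_cast hn.2
    have := (hn0.trans hnN).ne'
    have := (sub_pos.2 hnN).ne'
    field_simp
    ring
  rw [sum_congr rfl hsplit, ← mul_sum, sum_add_distrib, sum_Ioo_inv_sub_right]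
  have hharm : (harmonic (N - 1 - 0) : ℝ) ≤ harmonic N := harmonic_cast_mono (by omega)
  calc (N : ℝ)⁻¹ * (∑ n ∈ Ioo 0 N, (n : ℝ)⁻¹ + harmonic (N - 1 - 0))
      ≤ (N : ℝ)⁻¹ * (harmonic N + harmonic N) := by
        gcongr
        exact sum_Ioo_inv_le_harmonic 0 N
    _ = 2 * (harmonic N * (N : ℝ)⁻¹) := by ring

theorem IsAdmissible.tendsto_sum_mzvKernel_mul_harmonic_sub {k : List ℕ} (hk : IsAdmissible k) :
    Tendsto (fun N : ℕ =>
        ∑ n ∈ Ioo 0 N, mzvKernel k 0 n * ((harmonic (N - 1) : ℝ) - harmonic (N - 1 - n)))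
      atTop (nhds 0) := by
  set b := k.length - 1
  have hzero : Tendsto (fun N : ℕ => 2 * ((harmonic N : ℝ) ^ (b + 1) * (N : ℝ)⁻¹))
      atTop (nhds 0) := by
    simpa [div_eq_mul_inv] using
      ((isLittleO_harmonic_pow_rpow (b + 1) one_pos).tendsto_div_nhds_zero).const_mul 2
  refine squeeze_zero (fun N => sum_nonneg fun n _ => ?_) (fun N => ?_) hzero
  · exact mul_nonneg (mzvKernel_nonneg k 0 n)
      (sub_nonneg.2 (harmonic_cast_mono (Nat.sub_le (N - 1) n)))
  calc ∑ n ∈ Ioo 0 N, mzvKernel k 0 n * ((harmonic (N - 1) : ℝ) - harmonic (N - 1 - n))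
      ≤ ∑ n ∈ Ioo 0 N,
          (harmonic N : ℝ) ^ b * ((n : ℝ) ^ 2)⁻¹ * (n * ((N : ℝ) - n)⁻¹) := by
        refine sum_le_sum fun n hn => ?_
        have hnN := (mem_Ioo.1 hn).2
        refine mul_le_mul ((hk.mzvKernel_le 0 n).trans ?_) (harmonic_sub_harmonic_le hnN)
          (sub_nonneg.2 (harmonic_cast_mono (Nat.sub_le (N - 1) n)))
          (mul_nonneg (pow_nonneg (harmonic_cast_nonneg N) b) (by positivity))
        exact mul_le_mul_of_nonneg_right
          (pow_le_pow_left₀ (harmonic_cast_nonneg n) (harmonic_cast_mono hnN.le) b) (by positivity)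
    _ ≤ (harmonic N : ℝ) ^ b * (2 * (harmonic N * (N : ℝ)⁻¹)) := by
        simp only [mul_assoc _ (_ ^ 2)⁻¹, ← mul_sum]
        exact mul_le_mul_of_nonneg_left (sum_Ioo_inv_mul_inv_sub_le N)
          (pow_nonneg (harmonic_cast_nonneg N) b)
    _ = 2 * ((harmonic N : ℝ) ^ (b + 1) * (N : ℝ)⁻¹) := by ring

theorem isAdmissible_singleton {x : ℕ} (hx : 2 ≤ x) : IsAdmissible [x] where
  one_le i hi := by rw [List.mem_singleton] at hi; omega
  two_le_last := ⟨x, rfl, hx⟩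

theorem isAdmissible_pair {x y : ℕ} (hx : 1 ≤ x) (hy : 2 ≤ y) : IsAdmissible [x, y] where
  one_le i hi := by
    simp only [List.mem_cons, List.not_mem_nil, or_false] at hi
    omega
  two_le_last := ⟨y, rfl, hy⟩

/-- **Hoffman's relation.**  For a nonempty admissible index `k = (k₁,…,kₐ)`,
`Σ_{i=0}^{a-1} ζ(k₁,…,kᵢ,k_{i+1}+1,k_{i+2},…,kₐ)
  = Σ_{i=1}^{a} Σ_{j=1}^{kᵢ-1} ζ(k₁,…,k_{i-1},kᵢ-j,j+1,k_{i+1},…,kₐ)`. -/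
theorem hoffman_relation (k : List ℕ) (hk : k ≠ [])
    (hk1 : ∀ i ∈ k, 1 ≤ i) (hka : 2 ≤ k.getLast hk) :
    ∑ i ∈ Finset.range k.length,
        mzv (k.take i ++ [k.getD i 0 + 1] ++ k.drop (i + 1)) =
      ∑ i ∈ Finset.range k.length, ∑ j ∈ Finset.Icc 1 (k.getD i 0 - 1),
        mzv (k.take i ++ [k.getD i 0 - j, j + 1] ++ k.drop (i + 1)) := by
  have hadm : IsAdmissible k := ⟨hk1, _, List.getLast?_eq_some_getLast hk, hka⟩
  have hL : ∀ i ∈ range k.length, IsAdmissible [k.getD i 0 + 1] := fun i hi =>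
    isAdmissible_singleton (Nat.succ_le_succ (hk1 _ (by simp_all)))
  have hR : ∀ i, ∀ j ∈ Icc 1 (k.getD i 0 - 1), IsAdmissible [k.getD i 0 - j, j + 1] :=
    fun i j hj => isAdmissible_pair (by grind) (by grind)
  have hdiff := (tendsto_finsetSum (range k.length) fun i hi =>
      (hadm.replace (hL i hi) i).tendsto_truncMZV).sub
    (tendsto_finsetSum (range k.length) fun i _ => tendsto_finsetSum _ fun j hj =>
      (hadm.replace (hR i j hj) i).tendsto_truncMZV)
  simp only [hoffman_truncMZV hk1] at hdiff
  exact sub_eq_zero.1 (tendsto_nhds_unique hdiff hadm.tendsto_sum_mzvKernel_mul_harmonic_sub)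
end
end

section
/- Transport relation for the shuffle connected sum: for all nonempty indices k, l, every nonempty index h, and every positive integer N, one has Z^sh_N(k_↑; l_↑; h) = Z^sh_N(k; l_↑; ↑h) + Z^sh_N(k_↑; l; ↑h). -/
open scoped Classical

noncomputable section

/-- Last value of a tuple, with default `d` for the empty tuple. -/
def lastD {c : ℕ} (d : ℕ) (f : Fin c → ℕ) : ℕ :=
  if h : 0 < c then f ⟨c - 1, Nat.sub_lt h Nat.one_pos⟩ else d

/-- First value of a tuple, with default `d` for the empty tuple. -/
def headD {c : ℕ} (d : ℕ) (f : Fin c → ℕ) : ℕ :=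
  if h : 0 < c then f ⟨0, h⟩ else d

/-- The weight `∏_{i=1}^{a-1} nᵢ^(-kᵢ) · nₐ^(-(kₐ-1))` (the last exponent is lowered by 1). -/
def wtLast (k : List ℕ) (n : Fin k.length → ℕ) : ℝ :=
  ∏ i, ((n i : ℝ) ^ (if i.1 = k.length - 1 then k.get i - 1 else k.get i))⁻¹

/-- The weight `r₁^(-(h₁-1)) · ∏_{i=2}^{c} rᵢ^(-hᵢ)` (the first exponent is lowered by 1). -/
def wtFirst (h : List ℕ) (r : Fin h.length → ℕ) : ℝ :=
  ∏ i, ((r i : ℝ) ^ (if i.1 = 0 then h.get i - 1 else h.get i))⁻¹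

/-- The shuffle connected sum `Z^sh_N(k; l; h)`: the sum of
`(∏_{i<a} nᵢ^(-kᵢ)) nₐ^(-(kₐ-1)) (∏_{i<b} mᵢ^(-lᵢ)) m_b^(-(l_b-1)) r₁^(-(h₁-1)) ∏_{i≥2} rᵢ^(-hᵢ)`
over `0 < n₁ < ⋯ < nₐ`, `0 < m₁ < ⋯ < m_b`, `r₁ < ⋯ < r_c ≤ N` with `r₁ = nₐ + m_b`
(with `nₐ := 0` if `a = 0` and `m_b := 0` if `b = 0`). -/
def Zsh (N : ℕ) (k l h : List ℕ) : ℝ :=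
  ∑' p : (Fin k.length → ℕ) × (Fin l.length → ℕ) × (Fin h.length → ℕ),
    Set.indicator
      {p : (Fin k.length → ℕ) × (Fin l.length → ℕ) × (Fin h.length → ℕ) |
        (∀ i, 0 < p.1 i) ∧ StrictMono p.1 ∧ (∀ i, 0 < p.2.1 i) ∧ StrictMono p.2.1 ∧
          StrictMono p.2.2 ∧ lastD 0 p.2.2 ≤ N ∧
          headD 0 p.2.2 = lastD 0 p.1 + lastD 0 p.2.1}
      (fun p => wtLast k p.1 * wtLast l p.2.1 * wtFirst h p.2.2) p

/-- `k_↑`: increase the last entry of an index by `1` (`∅_↑ = ∅`). -/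
def upLast : List ℕ → List ℕ
  | [] => []
  | k => k.dropLast ++ [k.getLast! + 1]

/-- `↑k`: increase the first entry of an index by `1` (`↑∅ = ∅`). -/
def upFirst : List ℕ → List ℕ
  | [] => []
  | a :: k => (a + 1) :: k

/-!
Raising the last exponent of `k` divides the weight of `n` by `nₐ`, and raising the first exponent
of `h` divides the weight of `r` by `r₁`. As `r₁ = nₐ + m_b` throughout the sum, the relation holds
term by term, by the partial fraction identity `1 / (n m) = 1 / (m (n + m)) + 1 / (n (n + m))`.
-/

section Tuple

variable {c : ℕ} {f : Fin c → ℕ}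

theorem lastD_eq_of_pos (hc : 0 < c) (d : ℕ) (f : Fin c → ℕ) :
    lastD d f = f ⟨c - 1, Nat.sub_lt hc Nat.one_pos⟩ :=
  dif_pos hc

theorem headD_eq_of_pos (hc : 0 < c) (d : ℕ) (f : Fin c → ℕ) : headD d f = f ⟨0, hc⟩ :=
  dif_pos hc

theorem le_lastD_of_monotone (hf : Monotone f) (d : ℕ) (i : Fin c) : f i ≤ lastD d f := by
  rw [lastD_eq_of_pos i.pos]
  exact hf (Nat.le_sub_one_of_lt i.isLt)

theorem headD_le_lastD_of_monotone (hf : Monotone f) (d : ℕ) : headD d f ≤ lastD d f := by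
  rcases Nat.eq_zero_or_pos c with rfl | hc
  · rfl
  · rw [headD_eq_of_pos hc]
    exact le_lastD_of_monotone hf d _

theorem lastD_pos (hc : 0 < c) (hf : ∀ i, 0 < f i) (d : ℕ) : 0 < lastD d f :=
  lastD_eq_of_pos hc d f ▸ hf _

end Tuple

theorem length_upLast (k : List ℕ) : (upLast k).length = k.length := by
  cases k <;> simp [upLast]

theorem length_upFirst (h : List ℕ) : (upFirst h).length = h.length := by
  cases h <;> rfl

theorem upLast_eq_dropLast_append {k : List ℕ} (hk : k ≠ []) :
    upLast k = k.dropLast ++ [k.getLast hk + 1] := by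
  cases k with
  | nil => contradiction
  | cons => rfl

theorem getElem_upLast (k : List ℕ) (i : ℕ) (hi : i < k.length) :
    (upLast k)[i]'(by rwa [length_upLast]) = if i = k.length - 1 then k[i] + 1 else k[i] := by
  have hk : k ≠ [] := List.ne_nil_of_length_pos (Nat.zero_lt_of_lt hi)
  simp only [upLast_eq_dropLast_append hk]
  split_ifs with hlast
  · subst hlast
    simp [List.getLast_eq_getElem]
  · have hi' : i < k.length - 1 := by omega
    simp [hi']

theorem getElem_upFirst (h : List ℕ) (i : ℕ) (hi : i < h.length) :
    (upFirst h)[i]'(by rwa [length_upFirst]) = if i = 0 then h[i] + 1 else h[i] := by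
  cases h with
  | nil => contradiction
  | cons => cases i <;> rfl

theorem wtLast_upLast_eq_prod (k : List ℕ) (n : Fin k.length → ℕ) :
    wtLast (upLast k) (n ∘ Fin.cast (length_upLast k)) = ∏ i, ((n i : ℝ) ^ k.get i)⁻¹ := by
  refine Fintype.prod_equiv (finCongr (length_upLast k)) _ _ fun i => ?_
  have hi : i.1 < k.length := length_upLast k ▸ i.isLt
  simp only [List.get_eq_getElem, getElem_upLast k i hi, length_upLast]
  split_ifs <;> rfl

theorem wtFirst_upFirst_eq_prod (h : List ℕ) (r : Fin h.length → ℕ) :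
    wtFirst (upFirst h) (r ∘ Fin.cast (length_upFirst h)) = ∏ i, ((r i : ℝ) ^ h.get i)⁻¹ := by
  refine Fintype.prod_equiv (finCongr (length_upFirst h)) _ _ fun i => ?_
  have hi : i.1 < h.length := length_upFirst h ▸ i.isLt
  simp only [List.get_eq_getElem, getElem_upFirst h i hi]
  split_ifs <;> rfl

theorem prod_inv_pow_eq_prod_inv_pow_div {ι G₀ : Type*} [Fintype ι] [CommGroupWithZero G₀]
    {e e' : ι → ℕ} {j : ι} (hj : e j = e' j + 1) (hne : ∀ i ≠ j, e i = e' i) (x : ι → G₀) :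
    ∏ i, (x i ^ e i)⁻¹ = (∏ i, (x i ^ e' i)⁻¹) / x j := by
  have hrest : ∏ i ∈ {j}ᶜ, (x i ^ e i)⁻¹ = ∏ i ∈ {j}ᶜ, (x i ^ e' i)⁻¹ :=
    Finset.prod_congr rfl fun i hi => by rw [hne i (by simpa using hi)]
  rw [Fintype.prod_eq_mul_prod_compl j, Fintype.prod_eq_mul_prod_compl j, hrest, hj, pow_succ,
    mul_inv, div_eq_mul_inv, mul_right_comm]

theorem wtLast_upLast {k : List ℕ} (hk : k ≠ []) (hpos : 0 < k.getLast hk)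
    (n : Fin k.length → ℕ) :
    wtLast (upLast k) (n ∘ Fin.cast (length_upLast k)) = wtLast k n / lastD 0 n := by
  have hlen : 0 < k.length := List.length_pos_of_ne_nil hk
  rw [wtLast_upLast_eq_prod, lastD_eq_of_pos hlen]
  refine prod_inv_pow_eq_prod_inv_pow_div ?_ (fun i hi => ?_) fun i => (n i : ℝ)
  · rw [List.getLast_eq_getElem] at hpos
    simpa using (Nat.sub_add_cancel hpos).symm
  · exact (if_neg fun hij => hi (Fin.ext hij)).symm

theorem wtFirst_upFirst {h : List ℕ} (hh : h ≠ []) (hpos : 0 < h.head hh)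
    (r : Fin h.length → ℕ) :
    wtFirst (upFirst h) (r ∘ Fin.cast (length_upFirst h)) = wtFirst h r / headD 0 r := by
  have hlen : 0 < h.length := List.length_pos_of_ne_nil hh
  rw [wtFirst_upFirst_eq_prod, headD_eq_of_pos hlen]
  refine prod_inv_pow_eq_prod_inv_pow_div ?_ (fun i hi => ?_) fun i => (r i : ℝ)
  · rw [List.head_eq_getElem] at hpos
    simpa using (Nat.sub_add_cancel hpos).symm
  · exact (if_neg fun hij => hi (Fin.ext hij)).symm

/-- The tuples `(n, m, r)` of lengths `a`, `b`, `c` over which a shuffle connected sum `Z^sh_N` is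
taken. The lengths are free so that indices with propositionally equal lengths, such as `k` and
`k_↑`, can share one summation set. -/
def shuffleSet (N a b c : ℕ) : Set ((Fin a → ℕ) × (Fin b → ℕ) × (Fin c → ℕ)) :=
  {p | (∀ i, 0 < p.1 i) ∧ StrictMono p.1 ∧ (∀ i, 0 < p.2.1 i) ∧ StrictMono p.2.1 ∧
    StrictMono p.2.2 ∧ lastD 0 p.2.2 ≤ N ∧ headD 0 p.2.2 = lastD 0 p.1 + lastD 0 p.2.1}

theorem shuffleSet_finite (N a b c : ℕ) : (shuffleSet N a b c).Finite := by
  refine (Set.finite_Iic (fun _ => N, fun _ => N, fun _ => N)).subset ?_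
  rintro ⟨n, m, r⟩ ⟨-, hn, -, hm, hr, hrN, hrnm⟩
  have hnm : lastD 0 n + lastD 0 m ≤ N :=
    hrnm ▸ (headD_le_lastD_of_monotone hr.monotone 0).trans hrN
  refine ⟨fun i => ?_, fun i => ?_, fun i => ?_⟩
  · exact (le_lastD_of_monotone hn.monotone 0 i).trans ((Nat.le_add_right _ _).trans hnm)
  · exact (le_lastD_of_monotone hm.monotone 0 i).trans ((Nat.le_add_left _ _).trans hnm)
  · exact (le_lastD_of_monotone hr.monotone 0 i).trans hrN

theorem Zsh_eq_sum {N a b c : ℕ} {k l h : List ℕ} (hk : k.length = a) (hl : l.length = b)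
    (hh : h.length = c) :
    Zsh N k l h = ∑ p ∈ (shuffleSet_finite N a b c).toFinset,
      wtLast k (p.1 ∘ Fin.cast hk) * wtLast l (p.2.1 ∘ Fin.cast hl) *
        wtFirst h (p.2.2 ∘ Fin.cast hh) := by
  subst hk hl hh
  set s := shuffleSet N k.length l.length h.length
  calc Zsh N k l h
      = ∑' p, s.indicator (fun p => wtLast k p.1 * wtLast l p.2.1 * wtFirst h p.2.2) p := rfl
    _ = _ := by
      rw [← tsum_subtype, ← Finset.tsum_subtype', Set.Finite.coe_toFinset]
      rfl

theorem div_mul_div_mul_eq_add {K : Type*} [Semifield K] {x y : K} (hx : x ≠ 0) (hy : y ≠ 0)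
    (hxy : x + y ≠ 0) (u v w : K) :
    u / x * (v / y) * w = u * (v / y) * (w / (x + y)) + u / x * v * (w / (x + y)) := by
  field_simp

theorem Zsh_transport_up_general (N : ℕ) {k l h : List ℕ} (hk : k ≠ []) (hkpos : 0 < k.getLast hk)
    (hl : l ≠ []) (hlpos : 0 < l.getLast hl) (hh : h ≠ []) (hhpos : 0 < h.head hh) :
    Zsh N (upLast k) (upLast l) h =
      Zsh N k (upLast l) (upFirst h) + Zsh N (upLast k) l (upFirst h) := by
  rw [Zsh_eq_sum (length_upLast k) (length_upLast l) rfl,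
    Zsh_eq_sum rfl (length_upLast l) (length_upFirst h),
    Zsh_eq_sum (length_upLast k) rfl (length_upFirst h), ← Finset.sum_add_distrib]
  refine Finset.sum_congr rfl fun p hp => ?_
  obtain ⟨hn, -, hm, -, -, -, hr⟩ := (Set.Finite.mem_toFinset _).mp hp
  have hn_pos : 0 < lastD 0 p.1 := lastD_pos (List.length_pos_of_ne_nil hk) hn 0
  have hm_pos : 0 < lastD 0 p.2.1 := lastD_pos (List.length_pos_of_ne_nil hl) hm 0
  simp only [wtLast_upLast hk hkpos, wtLast_upLast hl hlpos, wtFirst_upFirst hh hhpos, hr,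
    Fin.cast_refl, Function.comp_id, Nat.cast_add]
  exact div_mul_div_mul_eq_add (by positivity) (by positivity) (by positivity) _ _ _

/-- **Transport relation for the shuffle connected sum:**
`Z^sh_N(k_↑; l_↑; h) = Z^sh_N(k; l_↑; ↑h) + Z^sh_N(k_↑; l; ↑h)`
for nonempty indices `k`, `l`, a nonempty index `h`, and `N ≥ 1`. -/
theorem Zsh_transport_up (N : ℕ) (hN : 0 < N) (k l h : List ℕ)
    (hk : k ≠ []) (hk1 : ∀ i ∈ k, 1 ≤ i)
    (hl : l ≠ []) (hl1 : ∀ i ∈ l, 1 ≤ i)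
    (hh : h ≠ []) (hh1 : ∀ i ∈ h, 1 ≤ i) :
    Zsh N (upLast k) (upLast l) h =
      Zsh N k (upLast l) (upFirst h) + Zsh N (upLast k) l (upFirst h) :=
  Zsh_transport_up_general N hk (hk1 _ (List.getLast_mem hk)) hl (hl1 _ (List.getLast_mem hl))
    hh (hh1 _ (List.head_mem hh))
end
end

section
/- Transport relation for the shuffle connected sum: for all (possibly empty) indices k, l, every nonempty index h, and every positive integer N, one has Z^sh_N(k_→; l; ↑h) = Z^sh_N(k_↑; l; ←h). -/
open scoped Classical

noncomputable section

/-!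
The factor `n_{a+1}` belonging to the new entry of `k_→`, and the factor `r₁` belonging to the new
entry of `←h`, both occur with exponent `1 - 1 = 0`. Each of them is also determined by the other
variables, through the constraint `r₁ = n_{a+1} + m_b` on the left and `r₁ = nₐ + m_b` on the
right. Once they are eliminated, both sides sum the same terms over the same tuples: writing `r`
for the smallest remaining entry of the third tuple, the inequality `nₐ < n_{a+1}` on the left and
the inequality `r₁ < r` on the right both say `nₐ + m_b < r`.
-/

/-- The domain of summation of the shuffle connected sum: the tuples `n`, `m`, `r` of lengths
`a`, `b`, `c`. The conditions are those of `Zsh`, for lengths that need not come from lists. -/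
def connectedTriples (N a b c : ℕ) : Set ((Fin a → ℕ) × (Fin b → ℕ) × (Fin c → ℕ)) :=
  {p | (∀ i, 0 < p.1 i) ∧ StrictMono p.1 ∧ (∀ i, 0 < p.2.1 i) ∧ StrictMono p.2.1 ∧
    StrictMono p.2.2 ∧ lastD 0 p.2.2 ≤ N ∧ headD 0 p.2.2 = lastD 0 p.1 + lastD 0 p.2.1}

/-- The inverse of the monomial with exponents `e`, evaluated at `n`. -/
def invMonomial {a : ℕ} (e n : Fin a → ℕ) : ℝ :=
  ∏ i, ((n i : ℝ) ^ e i)⁻¹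

/-- The shuffle connected sum in terms of the exponents that occur in its summands, that is,
with `kₐ`, `l_b` and `h₁` already lowered by `1`. -/
def connectedSum (N : ℕ) {a b c : ℕ} (e : Fin a → ℕ) (f : Fin b → ℕ) (g : Fin c → ℕ) : ℝ :=
  ∑' p : connectedTriples N a b c,
    invMonomial e p.1.1 * invMonomial f p.1.2.1 * invMonomial g p.1.2.2

section Tuples

variable {n d x : ℕ}

theorem lastD_succ (f : Fin (n + 1) → ℕ) : lastD d f = f (Fin.last n) := by
  simp [lastD, Fin.last]

theorem headD_succ (f : Fin (n + 1) → ℕ) : headD d f = f 0 := by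
  simp [headD]

theorem lastD_zero_lt_iff {f : Fin n → ℕ} (hf : Monotone f) :
    lastD 0 f < x ↔ 0 < x ∧ ∀ i, f i < x := by
  cases n with
  | zero => simp [lastD]
  | succ n =>
    rw [lastD_succ]
    exact ⟨fun h => ⟨h.pos, fun i => (hf i.le_last).trans_lt h⟩, fun h => h.2 _⟩

theorem strictMono_snoc_iff {α : Type*} [Preorder α] {f : Fin n → α} {x : α} :
    StrictMono (Fin.snoc f x : Fin (n + 1) → α) ↔ StrictMono f ∧ ∀ i, f i < x := by
  rw [← Fin.insertNth_last', Fin.strictMono_insertNth_iff]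
  simp [Fin.castSucc_lt_last]

theorem pos_and_strictMono_snoc_iff {f : Fin n → ℕ} :
    ((∀ i, 0 < (Fin.snoc f x : Fin (n + 1) → ℕ) i) ∧
      StrictMono (Fin.snoc f x : Fin (n + 1) → ℕ)) ↔
    (∀ i, 0 < f i) ∧ StrictMono f ∧ lastD 0 f < x := by
  rw [strictMono_snoc_iff, Fin.forall_fin_succ']
  simp only [Fin.snoc_castSucc, Fin.snoc_last]
  constructor
  · rintro ⟨⟨hpos, hx⟩, hf, hlt⟩
    exact ⟨hpos, hf, (lastD_zero_lt_iff hf.monotone).2 ⟨hx, hlt⟩⟩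
  · rintro ⟨hpos, hf, hlast⟩
    obtain ⟨hx, hlt⟩ := (lastD_zero_lt_iff hf.monotone).1 hlast
    exact ⟨⟨hpos, hx⟩, hf, hlt⟩

end Tuples

section Transport

variable {N a b c : ℕ} {n : Fin a → ℕ} {m : Fin b → ℕ} {r : Fin (c + 1) → ℕ} {x : ℕ}

theorem head_eq_of_mem_connectedTriples (h : (n, m, r) ∈ connectedTriples N a b (c + 1)) :
    r 0 = lastD 0 n + lastD 0 m := by
  obtain ⟨-, -, -, -, -, -, hhead⟩ := h
  rwa [headD_succ] at hhead

theorem snoc_mem_connectedTriples_iff :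
    (Fin.snoc n x, m, r) ∈ connectedTriples N (a + 1) b (c + 1) ↔
      r 0 = x + lastD 0 m ∧
        (n, m, Fin.cons (lastD 0 n + lastD 0 m) r) ∈ connectedTriples N a b (c + 2) := by
  have hcons : StrictMono (Fin.cons (lastD 0 n + lastD 0 m) r : Fin (c + 2) → ℕ) ↔
      lastD 0 n + lastD 0 m < r 0 ∧ StrictMono r := strictMono_vecCons
  have hlt : r 0 = x + lastD 0 m → (lastD 0 n < x ↔ lastD 0 n + lastD 0 m < r 0) := by omega
  simp only [connectedTriples, Set.mem_ofPred_eq]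
  rw [← and_assoc, pos_and_strictMono_snoc_iff, hcons]
  simp only [lastD_succ, headD_succ, Fin.snoc_last, Fin.cons_zero, Fin.cons_last]
  tauto

theorem cons_init_mem_connectedTriples {n : Fin (a + 1) → ℕ}
    (h : (n, m, r) ∈ connectedTriples N (a + 1) b (c + 1)) :
    (Fin.init n, m, Fin.cons (lastD 0 (Fin.init n : Fin a → ℕ) + lastD 0 m) r) ∈
      connectedTriples N a b (c + 2) := by
  rw [← Fin.snoc_init_self n] at h
  exact (snoc_mem_connectedTriples_iff.1 h).2

theorem cons_tail_of_mem_connectedTriples (h : (n, m, r) ∈ connectedTriples N a b (c + 1)) :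
    (Fin.cons (lastD 0 n + lastD 0 m) (Fin.tail r) : Fin (c + 1) → ℕ) = r := by
  rw [← head_eq_of_mem_connectedTriples h, Fin.cons_self_tail]

theorem snoc_tail_mem_connectedTriples {r : Fin (c + 2) → ℕ}
    (h : (n, m, r) ∈ connectedTriples N a b (c + 2)) :
    (Fin.snoc n (r 1 - lastD 0 m), m, Fin.tail r) ∈ connectedTriples N (a + 1) b (c + 1) := by
  have ⟨_, _, _, _, hr, _⟩ := h
  have hle : lastD 0 m ≤ r 1 := calc
    lastD 0 m ≤ r 0 := by rw [head_eq_of_mem_connectedTriples h]; exact Nat.le_add_left _ _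
    _ ≤ r 1 := hr.monotone (Fin.zero_le 1)
  refine snoc_mem_connectedTriples_iff.2 ⟨(Nat.sub_add_cancel hle).symm, ?_⟩
  rwa [cons_tail_of_mem_connectedTriples h]

/-- The bijection behind the transport relation. It removes the last entry of `n` and prepends to
`r` the entry forced by the linear constraint. -/
def connectedTriplesEquiv (N a b c : ℕ) :
    connectedTriples N (a + 1) b (c + 1) ≃ connectedTriples N a b (c + 2) where
  toFun p := ⟨_, cons_init_mem_connectedTriples p.2⟩
  invFun p := ⟨_, snoc_tail_mem_connectedTriples p.2⟩
  left_inv := by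
    rintro ⟨⟨n, m, r⟩, h⟩
    have hlast : r 0 - lastD 0 m = n (Fin.last a) := by
      rw [head_eq_of_mem_connectedTriples h, lastD_succ, Nat.add_sub_cancel]
    ext1
    change (Fin.snoc (Fin.init n) (r 0 - lastD 0 m), m, r) = (n, m, r)
    rw [hlast, Fin.snoc_init_self]
  right_inv := by
    rintro ⟨⟨n, m, r⟩, h⟩
    simp only [Fin.init_snoc, cons_tail_of_mem_connectedTriples h]

theorem invMonomial_snoc (e : Fin a → ℕ) (x : ℕ) (n : Fin (a + 1) → ℕ) :
    invMonomial (Fin.snoc e x) n = invMonomial e (Fin.init n) * ((n (Fin.last a) : ℝ) ^ x)⁻¹ := by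
  simp [invMonomial, Fin.prod_univ_castSucc, Fin.init, mul_comm]

theorem invMonomial_cons (x : ℕ) (e : Fin a → ℕ) (n : Fin (a + 1) → ℕ) :
    invMonomial (Fin.cons x e) n = ((n 0 : ℝ) ^ x)⁻¹ * invMonomial e (Fin.tail n) := by
  simp [invMonomial, Fin.prod_univ_succ, Fin.tail, mul_comm]

theorem connectedSum_snoc_zero (N : ℕ) (e : Fin a → ℕ) (f : Fin b → ℕ) (g : Fin (c + 1) → ℕ) :
    connectedSum N (Fin.snoc e 0 : Fin (a + 1) → ℕ) f g =
      connectedSum N e f (Fin.cons 0 g : Fin (c + 2) → ℕ) := by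
  simp only [connectedSum, invMonomial_snoc, invMonomial_cons, pow_zero, inv_one, mul_one, one_mul]
  rw [← (connectedTriplesEquiv N a b c).tsum_eq]
  simp [connectedTriplesEquiv]

end Transport

/-- The exponents of `wtLast k`: the entries of `k`, the last one lowered by `1`. -/
def lowerLast (k : List ℕ) (i : Fin k.length) : ℕ :=
  if i.1 = k.length - 1 then k.get i - 1 else k.get i

/-- The exponents of `wtFirst h`: the entries of `h`, the first one lowered by `1`. -/
def lowerFirst (h : List ℕ) (i : Fin h.length) : ℕ :=
  if i.1 = 0 then h.get i - 1 else h.get i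

theorem Zsh_eq_connectedSum {N a c : ℕ} {k l h : List ℕ} {e : Fin a → ℕ} {g : Fin c → ℕ}
    (ha : k.length = a) (hc : h.length = c) (he : ∀ i, lowerLast k i = e (Fin.cast ha i))
    (hg : ∀ i, lowerFirst h i = g (Fin.cast hc i)) :
    Zsh N k l h = connectedSum N e (lowerLast l) g := by
  subst ha hc
  obtain rfl : lowerLast k = e := funext he
  obtain rfl : lowerFirst h = g := funext hg
  exact (tsum_subtype (connectedTriples N k.length l.length h.length) fun p =>
    wtLast k p.1 * wtLast l p.2.1 * wtFirst h p.2.2).symm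

section Arrows

theorem upLast_append_singleton (k : List ℕ) (x : ℕ) : upLast (k ++ [x]) = k ++ [x + 1] := by
  unfold upLast
  split
  · simp_all
  · simp [List.getLast!_eq_getLast?_getD]

theorem lowerLast_append_singleton (k : List ℕ) (x : ℕ) (i : Fin (k ++ [x]).length) :
    lowerLast (k ++ [x]) i =
      (Fin.snoc k.get (x - 1) : Fin (k.length + 1) → ℕ) (Fin.cast (by simp) i) := by
  simp only [lowerLast, Fin.snoc]
  grind

theorem lowerLast_upLast (k : List ℕ) (i : Fin (upLast k).length) :
    lowerLast (upLast k) i = k.get (Fin.cast (length_upLast k) i) := by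
  rcases k.eq_nil_or_concat' with rfl | ⟨k, x, rfl⟩
  · exact i.elim0
  · simp only [lowerLast, List.get_eq_getElem, upLast_append_singleton, Fin.val_cast]
    grind

theorem lowerFirst_cons (x : ℕ) (h : List ℕ) (i : Fin (x :: h).length) :
    lowerFirst (x :: h) i = (Fin.cons (x - 1) h.get : Fin (h.length + 1) → ℕ) i := by
  cases i using Fin.cases <;> simp [lowerFirst]

theorem lowerFirst_upFirst (h : List ℕ) (i : Fin (upFirst h).length) :
    lowerFirst (upFirst h) i = h.get (Fin.cast (length_upFirst h) i) := by
  cases h with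
  | nil => exact i.elim0
  | cons x t => exact (lowerFirst_cons (x + 1) t i).trans (by cases i using Fin.cases <;> rfl)

end Arrows

/-- **Transport relation for the shuffle connected sum:**
`Z^sh_N(k_→; l; ↑h) = Z^sh_N(k_↑; l; ←h)`
for (possibly empty) indices `k`, `l`, a nonempty index `h`, and `N ≥ 1`.
Here `k_→ = k ++ [1]` and `←h = 1 :: h`. -/
theorem Zsh_transport_arrow (N : ℕ) (hN : 0 < N) (k l h : List ℕ)
    (hk1 : ∀ i ∈ k, 1 ≤ i) (hl1 : ∀ i ∈ l, 1 ≤ i)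
    (hh : h ≠ []) (hh1 : ∀ i ∈ h, 1 ≤ i) :
    Zsh N (k ++ [1]) l (upFirst h) = Zsh N (upLast k) l (1 :: h) := by
  obtain ⟨x, t, rfl⟩ := List.exists_cons_of_ne_nil hh
  calc Zsh N (k ++ [1]) l (upFirst (x :: t))
      = connectedSum N (Fin.snoc k.get 0) (lowerLast l) (x :: t).get :=
        Zsh_eq_connectedSum (by simp) (length_upFirst _) (lowerLast_append_singleton k 1)
          (lowerFirst_upFirst _)
    _ = connectedSum N k.get (lowerLast l) (Fin.cons 0 (x :: t).get) :=
        connectedSum_snoc_zero N k.get (lowerLast l) (x :: t).get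
    _ = Zsh N (upLast k) l (1 :: x :: t) :=
        (Zsh_eq_connectedSum (length_upLast k) rfl (lowerLast_upLast k)
          (lowerFirst_cons 1 _)).symm
end
end

section
/- Transport relation for the Hoffman-duality connected sum: for every nonempty index k, every (possibly empty) index l, and every positive integer N, one has Z^HD_N(k_↑; l) = Z^HD_N(k; ←l). -/
open scoped Classical

noncomputable section

/-- The Hoffman-duality connected sum `Z^HD_N(k; l)`: the sum of
`(-1)^(nₐ-1) · binom(m₁, nₐ) · (∏_{i<a} nᵢ^(-kᵢ)) · nₐ^(-(kₐ-1)) · ∏_j m_j^(-l_j)`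
over `1 ≤ n₁ ≤ ⋯ ≤ nₐ ≤ m₁ ≤ ⋯ ≤ m_b ≤ N` (with `m₁ := N` when `b = 0`). -/
def ZHD (N : ℕ) (k l : List ℕ) : ℚ :=
  ∑ p ∈ Finset.univ.filter
      (fun p : (Fin k.length → Fin (N + 1)) × (Fin l.length → Fin (N + 1)) =>
        (∀ i, 1 ≤ (p.1 i : ℕ)) ∧ Monotone p.1 ∧ Monotone p.2 ∧
          lastD 0 (fun i => (p.1 i : ℕ)) ≤ headD N (fun j => (p.2 j : ℕ))),
    (-1 : ℚ) ^ (lastD 0 (fun i => (p.1 i : ℕ)) - 1) *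
      (Nat.choose (headD N fun j => (p.2 j : ℕ)) (lastD 0 fun i => (p.1 i : ℕ)) : ℚ) *
      (∏ i, (((p.1 i : ℕ) : ℚ) ^
          (if i.1 = k.length - 1 then k.get i - 1 else k.get i))⁻¹) *
      ∏ j, (((p.2 j : ℕ) : ℚ) ^ l.get j)⁻¹

/-!
Fix `n₁ ≤ ⋯ ≤ nₐ ≤ m₁ ≤ ⋯ ≤ m_b` and write `n = nₐ`, `M = m₁` (`M = N` if `b = 0`). An entry `m`
prepended to the `mⱼ` ranges over `n ≤ m ≤ M`, and summing it out against `1 / m` turns the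
connector `binom(m, n)` into `binom(M, n) / n`: since `binom(m, n) / m = binom(m - 1, n - 1) / n`,
this is the hockey-stick identity. The remaining factors of the summand depend only on the fixed
variables, so they can be arbitrary.
-/

theorem choose_add_one_div_add_one {K : Type*} [Semifield K] [CharZero K] (m r : ℕ) :
    ((m + 1).choose (r + 1) : K) / (m + 1) = m.choose r / (r + 1) := by
  have hm : (m + 1 : K) ≠ 0 := Nat.cast_add_one_ne_zero m
  have hr : (r + 1 : K) ≠ 0 := Nat.cast_add_one_ne_zero r
  rw [div_eq_div_iff hm hr, mul_comm (m.choose r : K)]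
  exact_mod_cast (Nat.add_one_mul_choose_eq m r).symm

theorem sum_Icc_choose_div {K : Type*} [Semifield K] [CharZero K] {n : ℕ} (hn : n ≠ 0) (M : ℕ) :
    ∑ m ∈ Finset.Icc n M, (m.choose n : K) / m = M.choose n / n := by
  obtain ⟨r, rfl⟩ := Nat.exists_eq_succ_of_ne_zero hn
  cases M with
  | zero => simp
  | succ s =>
    calc ∑ m ∈ Finset.Icc (r + 1) (s + 1), (m.choose (r + 1) : K) / m
        = ∑ m ∈ Finset.Icc r s, ((m + 1).choose (r + 1) : K) / (m + 1) := by
          rw [← Finset.map_add_right_Icc r s 1, Finset.sum_map]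
          simp
      _ = ∑ m ∈ Finset.Icc r s, (m.choose r : K) / (r + 1) := by
          simp only [choose_add_one_div_add_one]
      _ = (s + 1).choose (r + 1) / (r + 1 : ℕ) := by
          rw [← Finset.sum_div, ← Nat.sum_Icc_choose, Nat.cast_sum, Nat.cast_add_one]

theorem sum_fin_filter_eq_sum_Icc {A : Type*} [AddCommMonoid A] {N b : ℕ} (hb : b ≤ N) (a : ℕ)
    (g : ℕ → A) :
    ∑ j ∈ Finset.univ.filter fun j : Fin (N + 1) => a ≤ (j : ℕ) ∧ (j : ℕ) ≤ b, g j =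
      ∑ j ∈ Finset.Icc a b, g j :=
  Finset.sum_bij (fun j _ => (j : ℕ)) (by simp) (by simp [Fin.ext_iff])
    (fun j hj => ⟨⟨j, by grind⟩, by grind⟩) (by simp)

theorem lastD_eq_apply_last {c : ℕ} (d : ℕ) (f : Fin (c + 1) → ℕ) : lastD d f = f (Fin.last c) := by
  simp [lastD, Fin.last]

theorem headD_eq_apply_zero {b : ℕ} (d : ℕ) (f : Fin (b + 1) → ℕ) : headD d f = f 0 := by
  simp [headD]

theorem headD_le {N b : ℕ} (m : Fin b → Fin (N + 1)) : headD N (fun j => (m j : ℕ)) ≤ N := by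
  unfold headD
  split_ifs
  · exact Fin.is_le _
  · exact le_rfl

theorem monotone_cons_iff_le_headD {N b : ℕ} (j : Fin (N + 1)) (m : Fin b → Fin (N + 1)) :
    Monotone (Fin.cons j m : Fin (b + 1) → Fin (N + 1)) ↔
      (j : ℕ) ≤ headD N (fun i => (m i : ℕ)) ∧ Monotone m := by
  cases b with
  | zero => simp [headD, Fin.is_le, Subsingleton.monotone]
  | succ b =>
    rw [headD_eq_apply_zero, Fin.val_fin_le]
    exact monotone_vecCons

/-- The index set of the Hoffman-duality connected sum: the pairs of tuples with
`1 ≤ n₁ ≤ ⋯ ≤ n_c ≤ m₁ ≤ ⋯ ≤ m_b ≤ N`. -/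
def hdChains (N c b : ℕ) : Finset ((Fin c → Fin (N + 1)) × (Fin b → Fin (N + 1))) :=
  Finset.univ.filter fun p =>
    (∀ i, 1 ≤ (p.1 i : ℕ)) ∧ Monotone p.1 ∧ Monotone p.2 ∧
      lastD 0 (fun i => (p.1 i : ℕ)) ≤ headD N (fun j => (p.2 j : ℕ))

theorem mem_hdChains_cons {N c b : ℕ} {n : Fin c → Fin (N + 1)} {j : Fin (N + 1)}
    {m : Fin b → Fin (N + 1)} :
    (n, (Fin.cons j m : Fin (b + 1) → Fin (N + 1))) ∈ hdChains N c (b + 1) ↔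
      (n, m) ∈ hdChains N c b ∧
        lastD 0 (fun i => (n i : ℕ)) ≤ j ∧ (j : ℕ) ≤ headD N (fun i => (m i : ℕ)) := by
  simp only [hdChains, Finset.mem_filter, Finset.mem_univ, true_and, monotone_cons_iff_le_headD,
    headD_eq_apply_zero, Fin.cons_zero]
  constructor
  · rintro ⟨hpos, hn, ⟨hjm, hm⟩, hnj⟩
    exact ⟨⟨hpos, hn, hm, hnj.trans hjm⟩, hnj, hjm⟩
  · rintro ⟨⟨hpos, hn, hm, -⟩, hnj, hjm⟩
    exact ⟨hpos, hn, ⟨hjm, hm⟩, hnj⟩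

theorem sum_hdChains_succ {A : Type*} [AddCommMonoid A] (N c b : ℕ)
    (f : (Fin c → Fin (N + 1)) × (Fin (b + 1) → Fin (N + 1)) → A) :
    ∑ p ∈ hdChains N c (b + 1), f p =
      ∑ p ∈ hdChains N c b,
        ∑ j ∈ Finset.univ.filter fun j : Fin (N + 1) =>
            lastD 0 (fun i => (p.1 i : ℕ)) ≤ (j : ℕ) ∧ (j : ℕ) ≤ headD N (fun i => (p.2 i : ℕ)),
          f (p.1, Fin.cons j p.2) := by
  rw [Finset.sum_sigma']
  refine Finset.sum_bij' (fun p _ => ⟨(p.1, Fin.tail p.2), p.2 0⟩)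
    (fun q _ => (q.1.1, Fin.cons q.2 q.1.2)) ?_ ?_ (by simp) (by simp) (by simp)
  · rintro ⟨n, m⟩ hp
    rw [← Fin.cons_self_tail m, mem_hdChains_cons] at hp
    simpa using hp
  · rintro ⟨⟨n, m⟩, j⟩ hq
    simpa [mem_hdChains_cons] using hq

/-- The Hoffman-duality connected sum with the monomial `∏ nᵢ^(-eᵢ) ∏ mⱼ^(-fⱼ)` replaced by an
arbitrary weight `W n m`; only the sign and the binomial connector are kept. -/
def weightedZHD {K : Type*} [Field K] (N : ℕ) {c b : ℕ}
    (W : (Fin c → Fin (N + 1)) → (Fin b → Fin (N + 1)) → K) : K :=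
  ∑ p ∈ hdChains N c b,
    (-1) ^ (lastD 0 (fun i => (p.1 i : ℕ)) - 1) *
      ((headD N fun j => (p.2 j : ℕ)).choose (lastD 0 fun i => (p.1 i : ℕ)) : K) * W p.1 p.2

theorem ZHD_transport_up_general {K : Type*} [Field K] [CharZero K] (N : ℕ) {c b : ℕ}
    (W : (Fin (c + 1) → Fin (N + 1)) → (Fin b → Fin (N + 1)) → K) :
    weightedZHD N (fun n m => W n m / ((n (Fin.last c) : ℕ) : K)) =
      weightedZHD N (fun n (m : Fin (b + 1) → Fin (N + 1)) =>
        W n (Fin.tail m) / ((m 0 : ℕ) : K)) := by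
  rw [weightedZHD, weightedZHD, sum_hdChains_succ]
  refine Finset.sum_congr rfl fun ⟨n, m⟩ hp => ?_
  simp only [lastD_eq_apply_last, headD_eq_apply_zero, Fin.cons_zero, Fin.tail_cons]
  have hn : (n (Fin.last c) : ℕ) ≠ 0 :=
    Nat.one_le_iff_ne_zero.mp ((Finset.mem_filter.mp hp).2.1 (Fin.last c))
  set a : ℕ := (n (Fin.last c)).val
  set M : ℕ := headD N fun j => (m j : ℕ)
  calc (-1) ^ (a - 1) * (M.choose a : K) * (W n m / a)
      = (-1) ^ (a - 1) * W n m * (M.choose a / a) := by ring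
    _ = (-1) ^ (a - 1) * W n m *
          ∑ j ∈ Finset.univ.filter fun j : Fin (N + 1) => a ≤ (j : ℕ) ∧ (j : ℕ) ≤ M,
            ((j : ℕ).choose a : K) / (j : ℕ) := by
        rw [sum_fin_filter_eq_sum_Icc (headD_le m) a fun j => (j.choose a : K) / j,
          sum_Icc_choose_div hn]
    _ = ∑ j ∈ Finset.univ.filter fun j : Fin (N + 1) => a ≤ (j : ℕ) ∧ (j : ℕ) ≤ M,
          (-1) ^ (a - 1) * ((j : ℕ).choose a : K) * (W n m / (j : ℕ)) := by
        rw [Finset.mul_sum]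
        exact Finset.sum_congr rfl fun j _ => by ring

/-- The weight `∏ nᵢ^(-eᵢ) ∏ mⱼ^(-fⱼ)`, which specializes `weightedZHD` to `ZHD`. The exponents are
those that occur in the product, so `e` is an index whose last entry is already lowered by `1`. -/
def monomialWeight {N c b : ℕ} (e : Fin c → ℕ) (f : Fin b → ℕ) (n : Fin c → Fin (N + 1))
    (m : Fin b → Fin (N + 1)) : ℚ :=
  (∏ i, (((n i : ℕ) : ℚ) ^ e i)⁻¹) * ∏ j, (((m j : ℕ) : ℚ) ^ f j)⁻¹

theorem monomialWeight_snoc_add_one {N c b : ℕ} (e : Fin c → ℕ) (x : ℕ) (f : Fin b → ℕ)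
    (n : Fin (c + 1) → Fin (N + 1)) (m : Fin b → Fin (N + 1)) :
    monomialWeight (Fin.snoc e (x + 1) : Fin (c + 1) → ℕ) f n m =
      monomialWeight (Fin.snoc e x : Fin (c + 1) → ℕ) f n m / ((n (Fin.last c) : ℕ) : ℚ) := by
  simp only [monomialWeight, Fin.prod_univ_castSucc, Fin.snoc_castSucc, Fin.snoc_last, pow_succ,
    mul_inv]
  ring

theorem monomialWeight_of_zero_eq_one {N c b : ℕ} (e : Fin c → ℕ) {f : Fin (b + 1) → ℕ}
    (hf : f 0 = 1) (n : Fin c → Fin (N + 1)) (m : Fin (b + 1) → Fin (N + 1)) :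
    monomialWeight e f n m = monomialWeight e (Fin.tail f) n (Fin.tail m) / ((m 0 : ℕ) : ℚ) := by
  simp only [monomialWeight, Fin.prod_univ_succ, hf, pow_one, Fin.tail]
  ring

theorem ZHD_eq_weightedZHD (N : ℕ) {k : List ℕ} {c : ℕ} (hc : k.length = c) (l : List ℕ) :
    ZHD N k l = weightedZHD N (monomialWeight
      (fun i : Fin c => if i.1 = c - 1 then k[i] - 1 else k[i]) l.get) := by
  subst hc
  simp only [ZHD, weightedZHD, monomialWeight, hdChains, mul_assoc]
  rfl

theorem ZHD_concat (N : ℕ) (ks : List ℕ) (x : ℕ) (l : List ℕ) :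
    ZHD N (ks ++ [x]) l = weightedZHD N
      (monomialWeight (Fin.snoc ks.get (x - 1) : Fin (ks.length + 1) → ℕ) l.get) := by
  rw [ZHD_eq_weightedZHD N (c := ks.length + 1) (by simp)]
  congr 2
  funext i
  cases i using Fin.lastCases with
  | last => simp
  | cast i => simp [i.isLt.ne]

theorem upLast_concat (ks : List ℕ) (x : ℕ) : upLast (ks ++ [x]) = ks ++ [x + 1] := by
  have h : upLast (ks ++ [x]) = (ks ++ [x]).dropLast ++ [(ks ++ [x]).getLast! + 1] := by
    cases ks <;> rfl
  rw [h, List.dropLast_concat, List.getLast!_of_getLast? List.getLast?_concat]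

theorem ZHD_upLast_concat (N : ℕ) (ks : List ℕ) (x : ℕ) (l : List ℕ) :
    ZHD N (upLast (ks ++ [x + 1])) l = weightedZHD N fun n m =>
      monomialWeight (Fin.snoc ks.get x : Fin (ks.length + 1) → ℕ) l.get n m /
        ((n (Fin.last ks.length) : ℕ) : ℚ) := by
  rw [upLast_concat, ZHD_concat]
  exact congrArg _ (funext₂ fun n m => monomialWeight_snoc_add_one ks.get x l.get n m)

theorem ZHD_concat_one_cons (N : ℕ) (ks : List ℕ) (x : ℕ) (l : List ℕ) :
    ZHD N (ks ++ [x + 1]) (1 :: l) =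
      weightedZHD N fun n (m : Fin (l.length + 1) → Fin (N + 1)) =>
        monomialWeight (Fin.snoc ks.get x : Fin (ks.length + 1) → ℕ) l.get n (Fin.tail m) /
          ((m 0 : ℕ) : ℚ) := by
  rw [ZHD_concat]
  exact congrArg _ (funext₂ fun n m => monomialWeight_of_zero_eq_one _ rfl n m)

/-- **Transport relation for the Hoffman-duality connected sum:**
`Z^HD_N(k_↑; l) = Z^HD_N(k; ←l)` for every nonempty index `k`, every (possibly empty)
index `l`, and every `N ≥ 1`; here `←l = 1 :: l`. -/
theorem ZHD_transport_up (N : ℕ) (hN : 0 < N) (k l : List ℕ)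
    (hk : k ≠ []) (hk1 : ∀ i ∈ k, 1 ≤ i) (hl1 : ∀ i ∈ l, 1 ≤ i) :
    ZHD N (upLast k) l = ZHD N k (1 :: l) := by
  obtain ⟨ks, x, rfl⟩ := k.eq_nil_or_concat'.resolve_left hk
  obtain ⟨y, rfl⟩ := Nat.exists_eq_add_of_le' (hk1 x (by simp))
  rw [ZHD_upLast_concat, ZHD_transport_up_general, ZHD_concat_one_cons]
end
end

section
/- Transport relation for Ohno's cyclic connected sum at infinity: for every nonempty index k=(k_1,…,k_a), one has Z^O_∞(k_→) = Z^O_∞(←k) + ζ-series(k_↑) as an identity in [0,∞], where ζ-series(k_↑) := Σ_{0<n_1<⋯<n_a} (∏_{i=1}^{a−1} n_i^{−k_i})·n_a^{−(k_a+1)}. -/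
open scoped Classical ENNReal

noncomputable section

/-- Ohno's cyclic connected sum at infinity `Z^O_∞(k)`: the sum in `[0,∞]` of
`n₁^(-(k₁-1)) · (∏_{i≥2} nᵢ^(-kᵢ)) · (nₐ - n₁)⁻¹` over `0 < n₁ < ⋯ < nₐ`. -/
def ZOinf (k : List ℕ) : ℝ≥0∞ :=
  ∑' n : Fin k.length → ℕ,
    Set.indicator {n : Fin k.length → ℕ | (∀ i, 0 < n i) ∧ StrictMono n}
      (fun n =>
        (∏ i, ((n i : ℝ≥0∞) ^ (if i.1 = 0 then k.get i - 1 else k.get i))⁻¹) *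
          (((lastD 0 n - headD 0 n : ℕ) : ℝ≥0∞))⁻¹) n

/-- The multiple-zeta-type series of `k_↑`:
`Σ_{0 < n₁ < ⋯ < nₐ} (∏_{i<a} nᵢ^(-kᵢ)) · nₐ^(-(kₐ+1))`, in `[0,∞]`. -/
def zetaUp (k : List ℕ) : ℝ≥0∞ :=
  ∑' n : Fin k.length → ℕ,
    Set.indicator {n : Fin k.length → ℕ | (∀ i, 0 < n i) ∧ StrictMono n}
      (fun n =>
        ∏ i, ((n i : ℝ≥0∞) ^
          (if i.1 = k.length - 1 then k.get i + 1 else k.get i))⁻¹) n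

/-!
Fix a chain `0 < n₁ < ⋯ < nₐ`. Up to the common factor `∏ nᵢ^(-kᵢ)`, its extension by a last entry
`m` contributes `n₁ / (m (m - n₁))` to `Z^O_∞(k_→)`, its extension by a first entry `l` contributes
`1 / (nₐ - l)` to `Z^O_∞(←k)`, and the chain itself contributes `1 / nₐ` to `ζ(k_↑)`.
Put `F(N) = ∑_{0 ≤ l < n₁} 1 / (N - l)`. Then
`F(m - 1) - F(m) = 1 / (m - n₁) - 1 / m = n₁ / (m (m - n₁))`, so the sum over `m > nₐ` telescopes
to `F(nₐ)`, whose terms `l > 0` give the second sum and whose term `l = 0` gives `1 / nₐ`.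
-/

open Filter Topology
open Finset hiding tsum_subtype

section Tsum

theorem tsum_eq_of_eq_add_succ {M : Type*} [AddCommMonoid M] [TopologicalSpace M] [ContinuousAdd M]
    [T2Space M] {f t : ℕ → M} (ht : Summable t) (hft : ∀ n, f n = t n + f (n + 1))
    (hf : Tendsto f atTop (𝓝 0)) : ∑' n, t n = f 0 := by
  have partial_sum (n : ℕ) : ∑ i ∈ range n, t i + f n = f 0 := by
    induction n with
    | zero => rw [sum_range_zero, zero_add]
    | succ n ih => rw [sum_range_succ, add_assoc, ← hft, ih]
  have limit : Tendsto (fun _ : ℕ => f 0) atTop (𝓝 (∑' n, t n + 0)) := by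
    simpa only [partial_sum] using ht.tendsto_sum_tsum_nat.add hf
  rw [← add_zero (∑' n, t n)]
  exact tendsto_nhds_unique limit tendsto_const_nhds

theorem tsum_Ioi_eq_tsum_nat_add {M : Type*} [AddCommMonoid M] [TopologicalSpace M]
    (f : ℕ → M) (N : ℕ) : ∑' m : Set.Ioi N, f m = ∑' j : ℕ, f (N + j + 1) := by
  have shift_injective : Function.Injective fun j : ℕ => N + j + 1 := fun i j hij => by
    simpa using hij
  have range_shift : Set.range (fun j : ℕ => N + j + 1) = Set.Ioi N := by
    ext m
    constructor
    · rintro ⟨j, rfl⟩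
      exact Nat.lt_succ_of_le (Nat.le_add_right N j)
    · exact fun hm => (Nat.exists_eq_add_of_lt hm).imp fun _ => Eq.symm
  rw [← range_shift, tsum_range f shift_injective]

theorem tsum_subtype_eq_tsum_tsum_of_mem_iff {α β γ : Type*} (e : α × β ≃ γ) {s : Set γ}
    {t : Set β} {u : β → Set α} (h : ∀ a b, e (a, b) ∈ s ↔ b ∈ t ∧ a ∈ u b) (f : γ → ℝ≥0∞) :
    ∑' c : s, f c = ∑' b : t, ∑' a : u b, f (e (a, b)) := by
  rw [tsum_subtype, ← e.tsum_eq, ENNReal.tsum_prod', ENNReal.tsum_comm,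
    tsum_subtype t fun b => ∑' a : u b, f (e (a, b))]
  refine tsum_congr fun b => ?_
  by_cases hb : b ∈ t
  · rw [Set.indicator_of_mem hb, tsum_subtype (u b) fun a => f (e (a, b))]
    simp only [Set.indicator_apply, h, hb, true_and]
  · simp only [Set.indicator_of_notMem hb, Set.indicator_apply, h, hb, false_and, if_false,
      tsum_zero]

end Tsum

section Connector

theorem inv_eq_inv_add_mul_div_add_inv_add {p q : ℝ≥0∞} (hp : p ≠ 0) (hp' : p ≠ ∞)
    (hq : q ≠ ∞) : p⁻¹ = (p + q)⁻¹ * (q / p) + (p + q)⁻¹ := by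
  have hpq : p + q ≠ 0 := fun h => hp (add_eq_zero.1 h).1
  calc p⁻¹ = (p + q)⁻¹ * (p + q) * p⁻¹ := by
        rw [ENNReal.inv_mul_cancel hpq (ENNReal.add_ne_top.2 ⟨hp', hq⟩), one_mul]
    _ = (p + q)⁻¹ * (q / p + 1) := by
        rw [mul_assoc, ← div_eq_mul_inv, add_comm p, ENNReal.add_div, ENNReal.div_self hp hp']
    _ = (p + q)⁻¹ * (q / p) + (p + q)⁻¹ := by rw [mul_add, mul_one]

theorem sum_range_inv_sub_eq_add {h N : ℕ} (hN : h ≤ N) :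
    ∑ l ∈ range h, ((N - l : ℕ) : ℝ≥0∞)⁻¹ =
      ((N + 1 : ℕ) : ℝ≥0∞)⁻¹ * (h / ((N + 1 - h : ℕ) : ℝ≥0∞)) +
        ∑ l ∈ range h, ((N + 1 - l : ℕ) : ℝ≥0∞)⁻¹ := by
  cases h with
  | zero => simp
  | succ h =>
    have split_last := inv_eq_inv_add_mul_div_add_inv_add (p := (N - h : ℕ)) (q := (h + 1 : ℕ))
      (Nat.cast_ne_zero.2 (by omega)) (ENNReal.natCast_ne_top _) (ENNReal.natCast_ne_top _)
    rw [← Nat.cast_add, show N - h + (h + 1) = N + 1 by omega] at split_last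
    rw [sum_range_succ, split_last, sum_range_succ' (fun l => ((N + 1 - l : ℕ) : ℝ≥0∞)⁻¹)]
    simp only [Nat.add_sub_add_right, Nat.sub_zero]
    ac_rfl

theorem tendsto_sum_range_inv_sub (h : ℕ) :
    Tendsto (fun N : ℕ => ∑ l ∈ range h, ((N - l : ℕ) : ℝ≥0∞)⁻¹) atTop (𝓝 0) := by
  rw [← sum_const_zero (s := range h)]
  exact tendsto_finsetSum _ fun l _ =>
    ENNReal.tendsto_inv_nat_nhds_zero.comp (tendsto_sub_atTop_nat l)

theorem tsum_Ioi_inv_mul_div_sub {h N : ℕ} (hN : h ≤ N) :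
    ∑' m : Set.Ioi N, (m : ℝ≥0∞)⁻¹ * (h / ((m - h : ℕ) : ℝ≥0∞)) =
      ∑ l ∈ range h, ((N - l : ℕ) : ℝ≥0∞)⁻¹ := by
  rw [tsum_Ioi_eq_tsum_nat_add fun m => (m : ℝ≥0∞)⁻¹ * (h / ((m - h : ℕ) : ℝ≥0∞))]
  refine tsum_eq_of_eq_add_succ (f := fun j => ∑ l ∈ range h, ((N + j - l : ℕ) : ℝ≥0∞)⁻¹)
    ENNReal.summable (fun j => sum_range_inv_sub_eq_add (by omega)) ?_
  simpa only [add_comm] using (tendsto_add_atTop_iff_nat N).2 (tendsto_sum_range_inv_sub h)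

theorem tsum_Ioi_inv_mul_div_sub_eq_sum_Ioo_add_inv {h N : ℕ} (h0 : 0 < h) (hN : h ≤ N) :
    ∑' m : Set.Ioi N, (m : ℝ≥0∞)⁻¹ * (h / ((m - h : ℕ) : ℝ≥0∞)) =
      ∑ l ∈ Ioo 0 h, ((N - l : ℕ) : ℝ≥0∞)⁻¹ + (N : ℝ≥0∞)⁻¹ := by
  rw [tsum_Ioi_inv_mul_div_sub hN, range_eq_Ico, ← sum_Ioo_add_eq_sum_Ico h0, Nat.sub_zero]

end Connector

/-- The set of chains `0 < n₁ < ⋯ < nₐ`, over which multiple zeta series are summed. -/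
def positiveChains (a : ℕ) : Set (Fin a → ℕ) :=
  {n | (∀ i, 0 < n i) ∧ StrictMono n}

/-- The summand `∏ i, nᵢ^(-κᵢ)` of a multiple zeta series, in `[0,∞]`. -/
def zetaWeight {a : ℕ} (κ n : Fin a → ℕ) : ℝ≥0∞ :=
  ∏ i, ((n i : ℝ≥0∞) ^ κ i)⁻¹

section Chains

variable {c : ℕ}

theorem snoc_mem_positiveChains_iff {n : Fin (c + 1) → ℕ} {m : ℕ} :
    (Fin.snoc n m : Fin (c + 2) → ℕ) ∈ positiveChains (c + 2) ↔
      n ∈ positiveChains (c + 1) ∧ n (Fin.last c) < m := by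
  have pos_trans : 0 < n (Fin.last c) → n (Fin.last c) < m → 0 < m := lt_trans
  simp only [positiveChains, Set.mem_ofPred_eq, Fin.strictMono_iff_lt_succ, Fin.forall_fin_succ',
    Fin.snoc_castSucc, Fin.snoc_last, Fin.succ_last, Fin.succ_castSucc]
  tauto

theorem cons_mem_positiveChains_iff {n : Fin (c + 1) → ℕ} {l : ℕ} :
    (Fin.cons l n : Fin (c + 2) → ℕ) ∈ positiveChains (c + 2) ↔
      n ∈ positiveChains (c + 1) ∧ l ∈ Ioo 0 (n 0) := by
  have strictMono_cons_iff : StrictMono (Fin.cons l n : Fin (c + 2) → ℕ) ↔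
      l < n 0 ∧ StrictMono n := strictMono_vecCons
  simp only [positiveChains, Set.mem_ofPred_eq, strictMono_cons_iff,
    Fin.forall_fin_succ (n := c + 1), Fin.cons_zero, Fin.cons_succ, mem_Ioo]
  tauto

theorem tsum_positiveChains_eq_tsum_snoc (f : (Fin (c + 2) → ℕ) → ℝ≥0∞) :
    ∑' n : positiveChains (c + 2), f n =
      ∑' n : positiveChains (c + 1), ∑' m : Set.Ioi (n.1 (Fin.last c)), f (Fin.snoc n.1 m.1) :=
  tsum_subtype_eq_tsum_tsum_of_mem_iff (Fin.snocEquiv fun _ => ℕ)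
    (fun _ _ => snoc_mem_positiveChains_iff) f

theorem tsum_positiveChains_eq_tsum_cons (f : (Fin (c + 2) → ℕ) → ℝ≥0∞) :
    ∑' n : positiveChains (c + 2), f n =
      ∑' n : positiveChains (c + 1), ∑ l ∈ Ioo 0 (n.1 0), f (Fin.cons l n.1) := by
  have h := tsum_subtype_eq_tsum_tsum_of_mem_iff (Fin.consEquiv fun _ : Fin (c + 2) => ℕ)
    (u := fun n => ↑(Ioo 0 (n 0))) (fun _ _ => cons_mem_positiveChains_iff) f
  simp only [Finset.coe_sort_coe] at h
  exact h.trans (tsum_congr fun n => Finset.tsum_subtype _ fun l => f (Fin.cons l n.1))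

end Chains

section Weight

theorem inv_pow_pred_eq_inv_pow_mul {x : ℝ≥0∞} {k : ℕ} (hx : x ≠ 0) (hx' : x ≠ ∞) (hk : k ≠ 0) :
    (x ^ (k - 1))⁻¹ = (x ^ k)⁻¹ * x := by
  rw [ENNReal.inv_pow, ENNReal.inv_pow, ← pow_sub_one_mul hk, mul_assoc,
    ENNReal.inv_mul_cancel hx hx', mul_one]

variable {c : ℕ}

theorem zetaWeight_snoc_one (κ n : Fin c → ℕ) (m : ℕ) :
    zetaWeight (Fin.snoc κ 1 : Fin (c + 1) → ℕ) (Fin.snoc n m) =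
      zetaWeight κ n * (m : ℝ≥0∞)⁻¹ := by
  simp only [zetaWeight, Fin.prod_univ_castSucc, Fin.snoc_castSucc, Fin.snoc_last, pow_one]

theorem zetaWeight_cons_one (κ n : Fin c → ℕ) (l : ℕ) :
    zetaWeight (Fin.cons 1 κ : Fin (c + 1) → ℕ) (Fin.cons l n) =
      (l : ℝ≥0∞)⁻¹ * zetaWeight κ n := by
  simp only [zetaWeight, Fin.prod_univ_succ, Fin.cons_succ, Fin.cons_zero, pow_one]

theorem prod_inv_pow_pred_head {κ n : Fin (c + 1) → ℕ} (hκ : κ 0 ≠ 0) (hn : n 0 ≠ 0) :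
    ∏ i, ((n i : ℝ≥0∞) ^ (if i.1 = 0 then κ i - 1 else κ i))⁻¹ = zetaWeight κ n * n 0 := by
  simp only [zetaWeight, Fin.prod_univ_succ, Fin.val_zero, Fin.val_succ, if_true,
    Nat.add_one_ne_zero, if_false]
  rw [inv_pow_pred_eq_inv_pow_mul (Nat.cast_ne_zero.2 hn) (ENNReal.natCast_ne_top _) hκ,
    mul_right_comm]

theorem prod_inv_pow_succ_last {κ n : Fin (c + 1) → ℕ} :
    ∏ i, ((n i : ℝ≥0∞) ^ (if i.1 = c then κ i + 1 else κ i))⁻¹ =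
      zetaWeight κ n * (n (Fin.last c) : ℝ≥0∞)⁻¹ := by
  simp only [zetaWeight, Fin.prod_univ_castSucc, Fin.val_castSucc, Fin.val_last, if_true,
    (Fin.is_lt _).ne, if_false, ENNReal.inv_pow, pow_succ, mul_assoc]

end Weight

section TupleSums

theorem tuple_induction {α : Type*} {P : ∀ a, (Fin a → α) → Prop}
    (get : ∀ k : List α, P k.length k.get) {a : ℕ} (κ : Fin a → α) : P a κ :=
  (List.equivSigmaTuple.forall_congr_right (q := fun s => P s.1 s.2)).1 get ⟨a, κ⟩

theorem ZOinf_ofFn_eq_tsum {a : ℕ} (κ : Fin a → ℕ) :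
    ZOinf (List.ofFn κ) = ∑' n : positiveChains a,
      (∏ i, ((n.1 i : ℝ≥0∞) ^ (if i.1 = 0 then κ i - 1 else κ i))⁻¹) *
        ((lastD 0 n.1 - headD 0 n.1 : ℕ) : ℝ≥0∞)⁻¹ := by
  induction κ using tuple_induction with
  | get k => rw [List.ofFn_get]; exact (tsum_subtype (positiveChains k.length) _).symm

theorem zetaUp_ofFn_eq_tsum {a : ℕ} (κ : Fin a → ℕ) :
    zetaUp (List.ofFn κ) = ∑' n : positiveChains a,
      ∏ i, ((n.1 i : ℝ≥0∞) ^ (if i.1 = a - 1 then κ i + 1 else κ i))⁻¹ := by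
  induction κ using tuple_induction with
  | get k => rw [List.ofFn_get]; exact (tsum_subtype (positiveChains k.length) _).symm

variable {c : ℕ} {κ : Fin (c + 1) → ℕ}

theorem ZOinf_ofFn (hκ : κ 0 ≠ 0) :
    ZOinf (List.ofFn κ) = ∑' n : positiveChains (c + 1),
      zetaWeight κ n * (n.1 0 / ((n.1 (Fin.last c) - n.1 0 : ℕ) : ℝ≥0∞)) := by
  rw [ZOinf_ofFn_eq_tsum]
  refine tsum_congr fun n => ?_
  rw [prod_inv_pow_pred_head hκ (n.2.1 0).ne', mul_assoc, div_eq_mul_inv]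
  rfl

theorem zetaUp_ofFn :
    zetaUp (List.ofFn κ) = ∑' n : positiveChains (c + 1),
      zetaWeight κ n * (n.1 (Fin.last c) : ℝ≥0∞)⁻¹ :=
  (zetaUp_ofFn_eq_tsum κ).trans (tsum_congr fun _ => prod_inv_pow_succ_last)

end TupleSums

section Transport

variable {c : ℕ} {κ : Fin (c + 1) → ℕ}

theorem ZOinf_ofFn_append_one (hκ : κ 0 ≠ 0) :
    ZOinf (List.ofFn κ ++ [1]) = ∑' n : positiveChains (c + 1), zetaWeight κ n *
      ∑' m : Set.Ioi (n.1 (Fin.last c)), (m : ℝ≥0∞)⁻¹ * (n.1 0 / ((m - n.1 0 : ℕ) : ℝ≥0∞)) := by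
  have append_eq : List.ofFn κ ++ [1] = List.ofFn (Fin.snoc κ 1 : Fin (c + 2) → ℕ) := by
    simp only [List.ofFn_succ' (Fin.snoc κ 1 : Fin (c + 2) → ℕ), Fin.snoc_castSucc, Fin.snoc_last,
      List.concat_eq_append]
  have snoc_zero (x : Fin (c + 1) → ℕ) (m : ℕ) : (Fin.snoc x m : Fin (c + 2) → ℕ) 0 = x 0 :=
    Fin.snoc_castSucc (α := fun _ => ℕ) m x 0
  rw [append_eq, ZOinf_ofFn (by rwa [snoc_zero]), tsum_positiveChains_eq_tsum_snoc fun n =>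
    zetaWeight _ n * (n 0 / ((n (Fin.last (c + 1)) - n 0 : ℕ) : ℝ≥0∞))]
  simp only [snoc_zero, Fin.snoc_last, zetaWeight_snoc_one, mul_assoc, ENNReal.tsum_mul_left]

theorem ZOinf_one_cons_ofFn :
    ZOinf (1 :: List.ofFn κ) = ∑' n : positiveChains (c + 1), zetaWeight κ n *
      ∑ l ∈ Ioo 0 (n.1 0), ((n.1 (Fin.last c) - l : ℕ) : ℝ≥0∞)⁻¹ := by
  rw [← List.ofFn_cons, ZOinf_ofFn (by simp), tsum_positiveChains_eq_tsum_cons fun n =>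
    zetaWeight _ n * (n 0 / ((n (Fin.last (c + 1)) - n 0 : ℕ) : ℝ≥0∞))]
  refine tsum_congr fun n => ?_
  rw [mul_sum]
  refine sum_congr rfl fun l hl => ?_
  have inv_mul_self : (l : ℝ≥0∞)⁻¹ * l = 1 :=
    ENNReal.inv_mul_cancel (Nat.cast_ne_zero.2 (mem_Ioo.1 hl).1.ne') (ENNReal.natCast_ne_top l)
  rw [zetaWeight_cons_one, ← Fin.succ_last, Fin.cons_succ, Fin.cons_zero, div_eq_mul_inv,
    mul_mul_mul_comm, inv_mul_self, one_mul]

theorem ZOinf_ofFn_transport (hκ : κ 0 ≠ 0) :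
    ZOinf (List.ofFn κ ++ [1]) = ZOinf (1 :: List.ofFn κ) + zetaUp (List.ofFn κ) := by
  rw [ZOinf_ofFn_append_one hκ, ZOinf_one_cons_ofFn, zetaUp_ofFn, ← ENNReal.tsum_add]
  refine tsum_congr fun n => ?_
  have head_le_last : n.1 0 ≤ n.1 (Fin.last c) := n.2.2.monotone (Fin.zero_le _)
  rw [tsum_Ioi_inv_mul_div_sub_eq_sum_Ioo_add_inv (n.2.1 0) head_le_last, mul_add]

end Transport

theorem ZOinf_transport_general (k : List ℕ) (hk : k ≠ []) (hk1 : k.head hk ≠ 0) :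
    ZOinf (k ++ [1]) = ZOinf (1 :: k) + zetaUp k := by
  obtain ⟨x, t, rfl⟩ := List.exists_cons_of_ne_nil hk
  simpa only [List.ofFn_get] using ZOinf_ofFn_transport (κ := (x :: t).get) hk1

/-- **Transport relation for Ohno's cyclic connected sum at infinity:**
`Z^O_∞(k_→) = Z^O_∞(←k) + ζ(k_↑)` in `[0,∞]` for every nonempty index `k`;
here `k_→ = k ++ [1]` and `←k = 1 :: k`. -/
theorem ZOinf_transport (k : List ℕ) (hk : k ≠ []) (hk1 : ∀ i ∈ k, 1 ≤ i) :
    ZOinf (k ++ [1]) = ZOinf (1 :: k) + zetaUp k :=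
  ZOinf_transport_general k hk (Nat.one_le_iff_ne_zero.1 (hk1 _ (List.head_mem hk)))
end
end
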